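/- Under Condition (★), for every integer h ≥ 2, ∑_{m ∈ 𝒩_h(x)} ω(m)² = κ·γ_h·x^{1/h}·(log log x)² + κ·γ_h·(2𝔇₁ + 1)·x^{1/h}·log log x + κ·γ_h·𝔇₂·x^{1/h} + O_h(x^{1/h}·log log x/log x) as x → ∞, where the implied constant depends only on h and on the data P, N, κ, θ. -/

import Mathlib

open Filter Topology Asymptotics
open scoped Classical

noncomputable section

/-- The norm on the free abelian monoid `P →₀ ℕ`, extended multiplicatively
from the norm `N` on the prime elements. -/
def Nm {P : Type*} (N : P → ℕ) (m : P →₀ ℕ) : ℕ :=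
  m.prod fun p k => N p ^ k

/-- The number of distinct prime elements generating `m`. -/
def omegaM {P : Type*} (m : P →₀ ℕ) : ℕ := m.support.card

/-- `m` is `h`-free: every multiplicity is at most `h - 1`. -/
def HFree {P : Type*} (h : ℕ) (m : P →₀ ℕ) : Prop := ∀ p, m p ≤ h - 1

/-- `m` is `h`-full: every nonzero multiplicity is at least `h`. -/
def HFull {P : Type*} (h : ℕ) (m : P →₀ ℕ) : Prop := ∀ p, m p = 0 ∨ h ≤ m p

/-- Condition (★): `#{m : N(m) ≤ x} = κ·x + O(x^θ)` with `κ > 0`, `0 ≤ θ < 1`. -/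
def StarCond {P : Type*} (N : P → ℕ) (κ θ : ℝ) : Prop :=
  0 < κ ∧ 0 ≤ θ ∧ θ < 1 ∧
    (fun x : ℝ => (({m : P →₀ ℕ | (Nm N m : ℝ) ≤ x}.ncard : ℝ) - κ * x))
      =O[atTop] fun x : ℝ => x ^ θ

/-- The generalized zeta function `ζ_M(s) = ∑_m N(m)^{-s}`. -/
def zetaM {P : Type*} (N : P → ℕ) (s : ℝ) : ℝ :=
  ∑' m : P →₀ ℕ, 1 / (Nm N m : ℝ) ^ s

/-- The constant `γ_h`. -/
def gammah {P : Type*} (N : P → ℕ) (h : ℕ) : ℝ :=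
  ∏' p : P, (1 + ((N p : ℝ) - (N p : ℝ) ^ (1 / (h : ℝ))) /
    ((N p : ℝ) ^ 2 * ((N p : ℝ) ^ (1 / (h : ℝ)) - 1)))

/-- `A` is the Mertens constant `𝔄` of the prime system:
`𝔄 = lim (∑_{N(p) ≤ x} 1/N(p) − log log x)`. -/
def IsMertens {P : Type*} (N : P → ℕ) (A : ℝ) : Prop :=
  Tendsto (fun x : ℝ =>
      (∑ᶠ p ∈ {p : P | (N p : ℝ) ≤ x}, 1 / (N p : ℝ)) - Real.log (Real.log x))
    atTop (𝓝 A)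

/-- The constant `𝔅 = -π²/6`. -/
def Bconst : ℝ := -(Real.pi ^ 2) / 6

/-- The constant `ℭ₁`, given the Mertens constant `A`. -/
def C1const {P : Type*} (N : P → ℕ) (h : ℕ) (A : ℝ) : ℝ :=
  A - ∑' p : P, ((N p : ℝ) - 1) / ((N p : ℝ) * ((N p : ℝ) ^ h - 1))

/-- The constant `ℭ₂`, given the Mertens constant `A`. -/
def C2const {P : Type*} (N : P → ℕ) (h : ℕ) (A : ℝ) : ℝ :=
  C1const N h A ^ 2 + C1const N h A + Bconst -
    ∑' p : P, (((N p : ℝ) ^ (h - 1) - 1) / ((N p : ℝ) ^ h - 1)) ^ 2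

/-- The convergent series `𝔏_h(r)`. -/
def LhSum {P : Type*} (N : P → ℕ) (h : ℕ) (r : ℝ) : ℝ :=
  ∑' p : P, 1 / ((N p : ℝ) ^ (r / (h : ℝ) - 1) *
    ((N p : ℝ) - (N p : ℝ) ^ (1 - 1 / (h : ℝ)) + 1))

/-- The constant `𝔇₁`, given the Mertens constant `A`. -/
def D1const {P : Type*} (N : P → ℕ) (h : ℕ) (A : ℝ) : ℝ :=
  A - Real.log (h : ℝ) + LhSum N h ((h : ℝ) + 1) - LhSum N h (2 * (h : ℝ))

/-- The constant `𝔇₂`, given the Mertens constant `A`. -/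
def D2const {P : Type*} (N : P → ℕ) (h : ℕ) (A : ℝ) : ℝ :=
  D1const N h A ^ 2 + D1const N h A + Bconst -
    ∑' p : P, (1 / ((N p : ℝ) - (N p : ℝ) ^ (1 - 1 / (h : ℝ)) + 1)) ^ 2

/-- The error term `R_{S_h}(x)` for `h`-free counts. -/
def RSfree (h : ℕ) (θ : ℝ) (x : ℝ) : ℝ :=
  if 1 / (h : ℝ) < θ then x ^ θ
  else if 1 / (h : ℝ) = θ then x ^ (1 / (h : ℝ)) * Real.log x
  else x ^ (1 / (h : ℝ))

/-- The error term `R_{N_h}(x)` for `h`-full counts. -/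
def RNfull (h : ℕ) (θ : ℝ) (x : ℝ) : ℝ :=
  if (h : ℝ) / ((h : ℝ) + 1) < θ then x ^ (θ / (h : ℝ))
  else if ∃ i : ℕ, 1 ≤ i ∧ i ≤ h - 1 ∧ θ = (h : ℝ) / ((h : ℝ) + (i : ℝ)) then
    x ^ (1 / ((h : ℝ) + 1)) * Real.log x
  else x ^ (1 / ((h : ℝ) + 1))

/-- finite level set -/
def lev {ι : Type*} (ν : ι → ℝ) (x : ℝ) : Finset ι :=
  if hf : {i | ν i ≤ x}.Finite then hf.toFinset else ∅

lemma mem_lev {ι : Type*} {ν : ι → ℝ} (hf : ∀ x, {i | ν i ≤ x}.Finite) {x : ℝ} {i : ι} :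
    i ∈ lev ν x ↔ ν i ≤ x := by
  simp [lev, hf x]

lemma lev_mono {ι : Type*} {ν : ι → ℝ} (hf : ∀ x, {i | ν i ≤ x}.Finite) {x y : ℝ} (h : x ≤ y) :
    lev ν x ⊆ lev ν y := by
  intro i hi
  rw [mem_lev hf] at *
  linarith

/-- Abel summation, finite index set -/
lemma abel_fin {ι : Type*} (s : Finset ι) (ν w : ι → ℝ) (f f' : ℝ → ℝ) (a x : ℝ) (hax : a ≤ x)
    (hν : ∀ i ∈ s, a ≤ ν i ∧ ν i ≤ x)
    (hf : ∀ t ∈ Set.Icc a x, HasDerivAt f (f' t) t) (hf' : ContinuousOn f' (Set.Icc a x)) :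
    IntervalIntegrable (fun t => f' t * ∑ i ∈ s with ν i ≤ t, w i) MeasureTheory.volume a x ∧
    ∑ i ∈ s, w i * f (ν i) = f x * ∑ i ∈ s, w i -
      ∫ t in a..x, f' t * ∑ i ∈ s with ν i ≤ t, w i := by
  have hint : IntervalIntegrable f' MeasureTheory.volume a x := by
    apply ContinuousOn.intervalIntegrable
    rwa [Set.uIcc_of_le hax]
  have key : ∀ i ∈ s, IntervalIntegrable (fun t => f' t * (if ν i ≤ t then w i else 0))
      MeasureTheory.volume a x ∧
      ∫ t in a..x, f' t * (if ν i ≤ t then w i else 0) = w i * (f x - f (ν i)) := by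
    intro i hi
    obtain ⟨h1, h2⟩ := hν i hi
    have e : (fun t => f' t * (if ν i ≤ t then w i else 0)) =
        (Set.Ici (ν i)).indicator (fun t => f' t * w i) := by
      ext t
      by_cases ht : ν i ≤ t <;> simp [Set.indicator, ht]
    have hI : IntervalIntegrable (fun t => f' t * (if ν i ≤ t then w i else 0))
      MeasureTheory.volume a x := by
      rw [e, intervalIntegrable_iff]
      exact ((intervalIntegrable_iff.1 hint).mul_const _).indicator measurableSet_Ici
    refine ⟨hI, ?_⟩
    have hsub1 : Set.uIcc a (ν i) ⊆ Set.uIcc a x := by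
      rw [Set.uIcc_of_le h1, Set.uIcc_of_le hax]; exact Set.Icc_subset_Icc_right h2
    have hsub2 : Set.uIcc (ν i) x ⊆ Set.uIcc a x := by
      rw [Set.uIcc_of_le h2, Set.uIcc_of_le hax]; exact Set.Icc_subset_Icc_left h1
    rw [← intervalIntegral.integral_add_adjacent_intervals (hI.mono_set hsub1) (hI.mono_set hsub2)]
    have z1 : ∫ t in a..(ν i), f' t * (if ν i ≤ t then w i else 0) = 0 := by
      rw [intervalIntegral.integral_of_le h1, MeasureTheory.integral_Ioc_eq_integral_Ioo]
      apply MeasureTheory.setIntegral_eq_zero_of_forall_eq_zero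
      intro t ht
      rw [if_neg (not_le.2 ht.2), mul_zero]
    have z2 : ∫ t in (ν i)..x, f' t * (if ν i ≤ t then w i else 0) = ∫ t in (ν i)..x, f' t * w i := by
      apply intervalIntegral.integral_congr
      intro t ht
      rw [Set.uIcc_of_le h2] at ht
      simp [ht.1]
    rw [z1, z2, intervalIntegral.integral_mul_const,
      intervalIntegral.integral_eq_sub_of_hasDerivAt (f := f) (f' := f')]
    · ring
    · intro t ht
      apply hf
      have := hsub2 ht
      rwa [Set.uIcc_of_le hax] at this
    · exact hint.mono_set hsub2
  have e2 : (fun t => f' t * ∑ i ∈ s with ν i ≤ t, w i) =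
      fun t => ∑ i ∈ s, f' t * (if ν i ≤ t then w i else 0) := by
    ext t
    rw [Finset.sum_filter, Finset.mul_sum]
  rw [e2]
  constructor
  · have := IntervalIntegrable.sum (f := fun i t => f' t * (if ν i ≤ t then w i else 0))
      s (fun i hi => (key i hi).1)
    exact this.congr (fun t _ => by simp)
  · rw [intervalIntegral.integral_finsetSum (fun i hi => (key i hi).1),
      Finset.sum_congr rfl (fun i hi => (key i hi).2), Finset.mul_sum, ← Finset.sum_sub_distrib]
    apply Finset.sum_congr rfl
    intro i _; ring

/-- Abel summation on level sets -/
lemma abel_lev {ι : Type*} (ν w : ι → ℝ) (hfin : ∀ x, {i | ν i ≤ x}.Finite) (h1 : ∀ i, 1 ≤ ν i)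
    (f f' : ℝ → ℝ) (x : ℝ) (hx : 1 ≤ x)
    (hf : ∀ t ∈ Set.Icc 1 x, HasDerivAt f (f' t) t) (hf' : ContinuousOn f' (Set.Icc 1 x)) :
    IntervalIntegrable (fun t => f' t * ∑ i ∈ lev ν t, w i) MeasureTheory.volume 1 x ∧
    ∑ i ∈ lev ν x, w i * f (ν i) = f x * ∑ i ∈ lev ν x, w i -
      ∫ t in (1:ℝ)..x, f' t * ∑ i ∈ lev ν t, w i := by
  obtain ⟨a, b⟩ := abel_fin (lev ν x) ν w f f' 1 x hx
    (fun i hi => ⟨h1 i, (mem_lev hfin).1 hi⟩) hf hf'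
  have e : ∀ t ∈ Set.uIcc 1 x, f' t * ∑ i ∈ lev ν x with ν i ≤ t, w i =
      f' t * ∑ i ∈ lev ν t, w i := by
    intro t ht
    rw [Set.uIcc_of_le hx] at ht
    congr 2
    ext i
    simp only [Finset.mem_filter, mem_lev hfin]
    constructor
    · exact fun h => h.2
    · exact fun h => ⟨h.trans ht.2, h⟩
  constructor
  · exact a.congr (fun t ht => e t (Set.uIoc_subset_uIcc ht))
  · rw [b, intervalIntegral.integral_congr e]

/-- Upper bounds from `S(t) ≤ K t`. -/
lemma abel_upper {ι : Type*} (ν w : ι → ℝ) (hfin : ∀ x, {i | ν i ≤ x}.Finite) (h1 : ∀ i, 1 ≤ ν i)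
    (K : ℝ) (hK : ∀ t, 1 ≤ t → ∑ i ∈ lev ν t, w i ≤ K * t)
    (σ : ℝ) (hσ : 0 < σ) (x : ℝ) (hx : 1 ≤ x) :
    ∑ i ∈ lev ν x, w i * ν i ^ (-σ) ≤ K * x ^ (1 - σ) + K * σ * ∫ t in (1:ℝ)..x, t ^ (-σ) := by
  have hpos : ∀ t ∈ Set.Icc 1 x, (0:ℝ) < t := fun t ht => by linarith [ht.1]
  have hf' : ContinuousOn (fun t : ℝ => -σ * t ^ (-σ - 1)) (Set.Icc 1 x) := by
    apply ContinuousOn.mul continuousOn_const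
    intro t ht
    exact (Real.continuousAt_rpow_const _ _ (Or.inl (hpos t ht).ne')).continuousWithinAt
  obtain ⟨a, b⟩ := abel_lev ν w hfin h1 (fun t => t ^ (-σ)) (fun t => -σ * t ^ (-σ - 1)) x hx
    (fun t ht => Real.hasDerivAt_rpow_const (Or.inl (hpos t ht).ne')) hf'
  have hc : IntervalIntegrable (fun t : ℝ => t ^ (-σ)) MeasureTheory.volume 1 x := by
    apply ContinuousOn.intervalIntegrable
    rw [Set.uIcc_of_le hx]
    intro t ht
    exact (Real.continuousAt_rpow_const _ _ (Or.inl (hpos t ht).ne')).continuousWithinAt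
  have hx0 : 0 < x := by linarith
  rw [b, sub_eq_add_neg, ← intervalIntegral.integral_neg, ← intervalIntegral.integral_const_mul]
  apply add_le_add
  · calc x ^ (-σ) * ∑ i ∈ lev ν x, w i ≤ x ^ (-σ) * (K * x) :=
        mul_le_mul_of_nonneg_left (hK x hx) (Real.rpow_nonneg hx0.le _)
      _ = K * x ^ (1 - σ) := by
        rw [show 1 - σ = -σ + 1 by ring, Real.rpow_add_one hx0.ne']; ring
  · apply intervalIntegral.integral_mono_on hx a.neg (hc.const_mul _)
    intro t ht
    have ht0 := hpos t ht
    calc -(-σ * t ^ (-σ - 1) * ∑ i ∈ lev ν t, w i)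
        = σ * t ^ (-σ - 1) * ∑ i ∈ lev ν t, w i := by ring
      _ ≤ σ * t ^ (-σ - 1) * (K * t) :=
        mul_le_mul_of_nonneg_left (hK t ht.1) (by positivity)
      _ = K * σ * t ^ (-σ) := by
        rw [show -σ = (-σ - 1) + 1 by ring, Real.rpow_add_one ht0.ne']; ring_nf

lemma abel_upper_lt {ι : Type*} (ν w : ι → ℝ) (hfin : ∀ x, {i | ν i ≤ x}.Finite)
    (h1 : ∀ i, 1 ≤ ν i)
    (K : ℝ) (hK0 : 0 ≤ K) (hK : ∀ t, 1 ≤ t → ∑ i ∈ lev ν t, w i ≤ K * t)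
    (σ : ℝ) (hσ : 0 < σ) (hσ1 : σ < 1) (x : ℝ) (hx : 1 ≤ x) :
    ∑ i ∈ lev ν x, w i * ν i ^ (-σ) ≤ K / (1 - σ) * x ^ (1 - σ) := by
  refine (abel_upper ν w hfin h1 K hK σ hσ x hx).trans ?_
  rw [integral_rpow (Or.inl (by linarith)), Real.one_rpow, show -σ + 1 = 1 - σ by ring]
  have h2 : 0 < 1 - σ := by linarith
  have : K / (1 - σ) * x ^ (1 - σ) - (K * x ^ (1 - σ) + K * σ * ((x ^ (1 - σ) - 1) / (1 - σ)))
     = K * σ / (1 - σ) := by field_simp; ring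
  have : 0 ≤ K * σ / (1 - σ) := by positivity
  linarith

lemma abel_upper_gt {ι : Type*} (ν w : ι → ℝ) (hfin : ∀ x, {i | ν i ≤ x}.Finite)
    (h1 : ∀ i, 1 ≤ ν i)
    (K : ℝ) (hK0 : 0 ≤ K) (hK : ∀ t, 1 ≤ t → ∑ i ∈ lev ν t, w i ≤ K * t)
    (σ : ℝ) (hσ : 1 < σ) (x : ℝ) (hx : 1 ≤ x) :
    ∑ i ∈ lev ν x, w i * ν i ^ (-σ) ≤ K + K * σ / (σ - 1) := by
  refine (abel_upper ν w hfin h1 K hK σ (by linarith) x hx).trans ?_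
  have hne : (0:ℝ) ∉ Set.uIcc 1 x := by
    rw [Set.uIcc_of_le hx]; intro h; linarith [h.1]
  rw [integral_rpow (Or.inr ⟨by linarith, hne⟩), Real.one_rpow, show -σ + 1 = 1 - σ by ring]
  have h2 : 0 < σ - 1 := by linarith
  have h3 : x ^ (1 - σ) ≤ 1 := Real.rpow_le_one_of_one_le_of_nonpos hx (by linarith)
  have h4 : 0 < x ^ (1 - σ) := Real.rpow_pos_of_pos (by linarith) _
  apply add_le_add
  · nlinarith
  · rw [show (x ^ (1 - σ) - 1) / (1 - σ) = (1 - x ^ (1 - σ)) / (σ - 1) by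
      rw [← neg_sub 1 (x ^ (1-σ)), ← neg_sub σ 1, neg_div_neg_eq], mul_div_assoc']
    have : 0 ≤ K * σ := by positivity
    apply div_le_div_of_nonneg_right _ h2.le
    nlinarith

/-- Summability from level bounds -/
lemma summable_of_lev {ι : Type*} (ν g : ι → ℝ) (hfin : ∀ x, {i | ν i ≤ x}.Finite)
    (hg : ∀ i, 0 ≤ g i) (C : ℝ) (hC : ∀ x, 1 ≤ x → ∑ i ∈ lev ν x, g i ≤ C) : Summable g := by
  apply summable_of_sum_le hg (c := C)
  intro s
  obtain ⟨B, hB⟩ : ∃ B, ∀ i ∈ s, ν i ≤ B := by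
    obtain ⟨B, hB⟩ := (s.image ν).bddAbove
    exact ⟨B, fun i hi => hB (by simpa using ⟨i, hi, rfl⟩)⟩
  refine le_trans ?_ (hC (max B 1) (le_max_right _ _))
  apply Finset.sum_le_sum_of_subset_of_nonneg
  · intro i hi
    rw [mem_lev hfin]
    exact (hB i hi).trans (le_max_left _ _)
  · intros; exact hg _

/-- real-valued norm -/
def rn {P : Type*} (N : P → ℕ) (m : P →₀ ℕ) : ℝ := (Nm N m : ℝ)
/-- prime norm -/
def pn {P : Type*} (N : P → ℕ) (p : P) : ℝ := (N p : ℝ)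
/-- prime power norm -/
def qn {P : Type*} (N : P → ℕ) (i : P × ℕ) : ℝ := rn N (Finsupp.single i.1 (i.2 + 1))
/-- indicator element -/
def ind {P : Type*} (S : Finset P) : P →₀ ℕ := Finsupp.indicator S (fun _ _ => 1)
/-- finset norm -/
def sn {P : Type*} (N : P → ℕ) (S : Finset P) : ℝ := rn N (ind S)
/-- counting function -/
def I0 {P : Type*} (N : P → ℕ) (x : ℝ) : ℝ := ∑ _m ∈ lev (rn N) x, (1:ℝ)

/-- working hypotheses -/
structure Sys {P : Type*} (N : P → ℕ) (κ τ K : ℝ) : Prop where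
  two : ∀ p, 2 ≤ N p
  hκ : 0 < κ
  hτ0 : 0 < τ
  hτ1 : τ < 1
  hK : 0 ≤ K
  fin : ∀ x, {m | rn N m ≤ x}.Finite
  bd : ∀ z, 0 < z → |I0 N z - κ * z| ≤ K * z ^ τ

section
variable {P : Type*} {N : P → ℕ}

lemma rn_zero : rn N 0 = 1 := by simp [rn, Nm]

lemma rn_add (a b : P →₀ ℕ) : rn N (a + b) = rn N a * rn N b := by
  unfold rn Nm
  rw [Finsupp.prod_add_index' (by simp) (by intros; rw [pow_add])]
  push_cast; rfl

lemma rn_single (p : P) (k : ℕ) : rn N (Finsupp.single p k) = (N p : ℝ) ^ k := by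
  unfold rn Nm
  rw [Finsupp.prod_single_index (by simp)]
  push_cast; rfl

lemma rn_one_le (hN : ∀ p, 2 ≤ N p) (m : P →₀ ℕ) : 1 ≤ rn N m := by
  unfold rn Nm
  norm_cast
  apply Nat.one_le_iff_ne_zero.2
  apply Finset.prod_ne_zero_iff.2
  intro p _
  have := hN p
  positivity

lemma rn_pos (hN : ∀ p, 2 ≤ N p) (m : P →₀ ℕ) : 0 < rn N m := by
  linarith [rn_one_le hN m]

lemma rn_nsmul (h : ℕ) (m : P →₀ ℕ) : rn N (h • m) = rn N m ^ h := by
  induction h with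
  | zero => simp [rn_zero]
  | succ n ih => rw [succ_nsmul, rn_add, ih, pow_succ]

lemma pn_single (p : P) : pn N p = rn N (Finsupp.single p 1) := by
  rw [rn_single]; simp [pn]

lemma qn_eq (p : P) (k : ℕ) : qn N (p, k) = (N p : ℝ) ^ (k + 1) := by
  simp only [qn, rn_single]

lemma ind_apply (S : Finset P) (p : P) : ind S p = if p ∈ S then 1 else 0 := by
  unfold ind
  by_cases h : p ∈ S
  · rw [Finsupp.indicator_of_mem h, if_pos h]
  · rw [Finsupp.indicator_of_notMem h, if_neg h]

lemma ind_inj : Function.Injective (ind : Finset P → (P →₀ ℕ)) := by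
  intro S T h
  ext p
  have := DFunLike.congr_fun h p
  simp only [ind_apply] at this
  by_cases h1 : p ∈ S <;> by_cases h2 : p ∈ T <;> simp_all

lemma fin_comp {ι : Type*} (e : ι → (P →₀ ℕ)) (he : Function.Injective e)
    (hf : ∀ x, {m | rn N m ≤ x}.Finite) : ∀ x, {i | rn N (e i) ≤ x}.Finite :=
  fun x => (hf x).preimage he.injOn

lemma fin_pn (hf : ∀ x, {m | rn N m ≤ x}.Finite) : ∀ x, {p | pn N p ≤ x}.Finite := by
  have := fin_comp (N := N) (fun p : P => Finsupp.single p 1)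
    (Finsupp.single_left_injective one_ne_zero) hf
  simpa only [pn_single] using this

lemma fin_qn (hf : ∀ x, {m | rn N m ≤ x}.Finite) : ∀ x, {p | qn N p ≤ x}.Finite := by
  refine fin_comp (N := N) (fun i : P × ℕ => Finsupp.single i.1 (i.2 + 1)) ?_ hf
  rintro ⟨p, k⟩ ⟨q, l⟩ h
  rw [Finsupp.single_eq_single_iff] at h
  aesop

lemma fin_sn (hf : ∀ x, {m | rn N m ≤ x}.Finite) : ∀ x, {p | sn N p ≤ x}.Finite :=
  fin_comp (N := N) ind ind_inj hf

lemma pn_two (hN : ∀ p, 2 ≤ N p) (p : P) : 2 ≤ pn N p := by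
  unfold pn; exact_mod_cast hN p

lemma lev_pn_lt_two (hN : ∀ p, 2 ≤ N p) (hf : ∀ x, {m | rn N m ≤ x}.Finite) (x : ℝ) (hx : x < 2) :
    lev (pn N) x = ∅ := by
  ext p
  simp only [mem_lev (fin_pn hf), Finset.notMem_empty, iff_false, not_le]
  linarith [pn_two hN p]

lemma I0_lt_one (hN : ∀ p, 2 ≤ N p) (hf : ∀ x, {m | rn N m ≤ x}.Finite) (x : ℝ) (hx : x < 1) :
    lev (rn N) x = ∅ := by
  ext p
  simp only [mem_lev hf, Finset.notMem_empty, iff_false, not_le]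
  linarith [rn_one_le hN p]

/-- shift lemma -/
lemma shift (hN : ∀ p, 2 ≤ N p) (hf : ∀ x, {m | rn N m ≤ x}.Finite) (e : P →₀ ℕ) (x : ℝ)
    (φ : (P →₀ ℕ) → ℝ) :
    ∑ m ∈ lev (rn N) x with e ≤ m, φ m = ∑ m ∈ lev (rn N) (x / rn N e), φ (m + e) := by
  symm
  apply Finset.sum_bij' (fun m _ => m + e) (fun m _ => m - e)
  · intro m hm
    rw [mem_lev hf, le_div_iff₀ (rn_pos hN e)] at hm
    simp only [Finset.mem_filter, mem_lev hf, rn_add]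
    exact ⟨hm, le_add_self⟩
  · intro m hm
    simp only [Finset.mem_filter, mem_lev hf] at hm
    rw [mem_lev hf, le_div_iff₀ (rn_pos hN e), ← rn_add, tsub_add_cancel_of_le hm.2]
    exact hm.1
  · intro m _; exact add_tsub_cancel_right _ _
  · intro m hm
    simp only [Finset.mem_filter] at hm
    exact tsub_add_cancel_of_le hm.2
  · intros; rfl

lemma star_sys (hN : ∀ p, 2 ≤ N p) (κ θ τ : ℝ) (hs : StarCond N κ θ) (hτ : θ ≤ τ) (hτ0 : 0 < τ)
    (hτ1 : τ < 1) : ∃ K, Sys N κ τ K := by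
  obtain ⟨hκ, hθ0, hθ1, hO⟩ := hs
  have hfin : ∀ x, {m | rn N m ≤ x}.Finite := by
    by_contra hcon
    push Not at hcon
    obtain ⟨x0, hx0⟩ := hcon
    have h0 : ∀ x, x0 ≤ x → ({m : P →₀ ℕ | (Nm N m : ℝ) ≤ x}.ncard : ℝ) = 0 := by
      intro x hx
      have : {m : P →₀ ℕ | (Nm N m : ℝ) ≤ x}.Infinite :=
        Set.Infinite.mono (fun m hm => le_trans hm hx) hx0
      rw [this.ncard]; simp
    have h1 : (fun x : ℝ => x) =O[atTop] fun x : ℝ => x ^ θ := by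
      have : (fun x : ℝ => -(κ * x)) =O[atTop] fun x : ℝ => x ^ θ := by
        refine hO.congr' ?_ EventuallyEq.rfl
        filter_upwards [eventually_ge_atTop x0] with x hx
        rw [h0 x hx]; ring
      have h2 := this.const_mul_left (-κ⁻¹)
      refine h2.congr_left ?_
      intro x; field_simp
    have h2 : (fun x : ℝ => x ^ θ) =o[atTop] (fun x : ℝ => x) := by
      rw [isLittleO_iff_tendsto']
      · refine (tendsto_rpow_neg_atTop (by linarith : 0 < 1 - θ)).congr' ?_
        filter_upwards [eventually_gt_atTop 0] with x hx
        rw [show -(1 - θ) = θ - 1 by ring, Real.rpow_sub_one hx.ne']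
      · filter_upwards [eventually_gt_atTop 0] with x hx h
        exact absurd h hx.ne'
    have h3 := h1.trans_isLittleO h2
    have h4 := (isLittleO_irrefl' (l := atTop) (f' := fun x : ℝ => x) ?_) h3
    · exact h4
    · apply Eventually.frequently
      filter_upwards [eventually_gt_atTop 0] with x hx
      simpa using hx.ne'
  have hI : ∀ x, I0 N x = ({m : P →₀ ℕ | (Nm N m : ℝ) ≤ x}.ncard : ℝ) := by
    intro x
    have : {m : P →₀ ℕ | (Nm N m : ℝ) ≤ x} = (lev (rn N) x : Set (P →₀ ℕ)) := by
      ext m; simp [mem_lev hfin, rn]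
    rw [this, Set.ncard_coe_finset]; simp [I0]
  have hmono : ∀ x y, x ≤ y → I0 N x ≤ I0 N y := by
    intro x y hxy
    exact Finset.sum_le_sum_of_subset_of_nonneg (lev_mono hfin hxy) (by intros; norm_num)
  have hI0 : ∀ x, 0 ≤ I0 N x := fun x => Finset.sum_nonneg (by intros; norm_num)
  obtain ⟨c, hc⟩ := hO.bound
  obtain ⟨X, hX⟩ := eventually_atTop.1 hc
  set X1 := max X 1 with hX1
  have hX11 : 1 ≤ X1 := le_max_right _ _
  refine ⟨|c| + (I0 N X1 + κ * X1) + κ, hN, hκ, hτ0, hτ1, ?_, hfin, ?_⟩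
  · have := hI0 X1
    positivity
  intro z hz
  have hzτ : 0 < z ^ τ := Real.rpow_pos_of_pos hz _
  have a1 : 0 ≤ |c| * z ^ τ := by positivity
  have a2 : 0 ≤ (I0 N X1 + κ * X1) * z ^ τ := by
    have := hI0 X1
    positivity
  have a3 : 0 ≤ κ * z ^ τ := by positivity
  rw [add_mul, add_mul]
  rcases lt_or_ge z 1 with h1 | h1
  · have : I0 N z = 0 := by unfold I0; rw [I0_lt_one hN hfin z h1]; simp
    rw [this, zero_sub, abs_neg, abs_of_pos (by positivity)]
    have : z ≤ z ^ τ := by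
      conv_lhs => rw [← Real.rpow_one z]
      exact Real.rpow_le_rpow_of_exponent_ge hz h1.le hτ1.le
    nlinarith
  rcases le_total X1 z with h2 | h2
  · have := hX z ((le_max_left _ _).trans h2)
    rw [← hI, Real.norm_eq_abs, Real.norm_eq_abs, abs_of_pos (Real.rpow_pos_of_pos hz _)] at this
    have h3 : z ^ θ ≤ z ^ τ := Real.rpow_le_rpow_of_exponent_le h1 hτ
    have h4 : c * z ^ θ ≤ |c| * z ^ τ :=
      mul_le_mul (le_abs_self c) h3 (Real.rpow_nonneg hz.le _) (abs_nonneg c)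
    linarith
  · have h3 : 1 ≤ z ^ τ := Real.one_le_rpow h1 hτ0.le
    have h4 := hmono z X1 h2
    have h5 := hI0 z
    have h6 : |I0 N z - κ * z| ≤ I0 N X1 + κ * X1 := by
      rw [abs_le]; constructor <;> nlinarith [hI0 X1]
    nlinarith [hI0 X1, mul_pos hκ (by linarith : 0 < X1)]

lemma Sys.I0_le {κ τ K : ℝ} (H : Sys N κ τ K) (t : ℝ) (ht : 1 ≤ t) : I0 N t ≤ (κ + K) * t := by
  have := (abs_le.1 (H.bd t (by linarith))).2
  have h2 : t ^ τ ≤ t := by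
    conv_rhs => rw [← Real.rpow_one t]
    exact Real.rpow_le_rpow_of_exponent_le ht H.hτ1.le
  nlinarith [H.hK]
end

section
variable {P : Type*} {N : P → ℕ} {κ τ K : ℝ}

/-- log sum -/
def Tsum (N : P → ℕ) (x : ℝ) : ℝ := ∑ m ∈ lev (rn N) x, Real.log (rn N m)

lemma rpow_cont (a x : ℝ) : ContinuousOn (fun t : ℝ => t ^ a) (Set.Icc 1 x) := by
  intro t ht
  exact (Real.continuousAt_rpow_const _ _ (Or.inl (by linarith [ht.1]))).continuousWithinAt

lemma T_bound (H : Sys N κ τ K) : ∃ C, 0 ≤ C ∧ ∀ x, 1 ≤ x →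
    |Tsum N x - κ * x * Real.log x + κ * x| ≤ C * x ^ ((1 + τ) / 2) := by
  have hτ0 := H.hτ0
  have hτ1 := H.hτ1
  have hK := H.hK
  have hκ := H.hκ
  refine ⟨K * (2 / (1 - τ)) + κ + K / τ, ?_, ?_⟩
  · have : 0 < 1 - τ := by linarith
    positivity
  intro x hx
  have hx0 : 0 < x := by linarith
  have hinv : ContinuousOn (fun t : ℝ => t⁻¹) (Set.Icc 1 x) :=
    fun t ht => (continuousAt_inv₀ (by linarith [ht.1])).continuousWithinAt
  obtain ⟨a, b⟩ := abel_lev (rn N) (fun _ => 1) H.fin (rn_one_le H.two) Real.log (fun t => t⁻¹) x hx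
    (fun t ht => Real.hasDerivAt_log (by linarith [ht.1])) hinv
  have b' : Tsum N x = Real.log x * I0 N x - ∫ t in (1:ℝ)..x, t⁻¹ * I0 N t := by
    unfold Tsum I0; rw [← b]; simp
  have hint : (∫ t in (1:ℝ)..x, t⁻¹ * I0 N t) - κ * (x - 1) =
      ∫ t in (1:ℝ)..x, (t⁻¹ * I0 N t - κ) := by
    rw [intervalIntegral.integral_sub (f := fun t : ℝ => t⁻¹ * I0 N t) a (by simp)]; simp; ring
  have hb : |(∫ t in (1:ℝ)..x, t⁻¹ * I0 N t) - κ * (x - 1)| ≤ K / τ * x ^ τ := by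
    rw [hint, ← Real.norm_eq_abs]
    have hII : IntervalIntegrable (fun t : ℝ => K * t ^ (τ - 1)) MeasureTheory.volume 1 x := by
      apply ContinuousOn.intervalIntegrable
      rw [Set.uIcc_of_le hx]
      exact continuousOn_const.mul (rpow_cont _ _)
    refine (intervalIntegral.norm_integral_le_of_norm_le (g := fun t => K * t ^ (τ - 1)) hx ?_
      hII).trans ?_
    · refine Eventually.of_forall ?_
      intro t ht
      have ht0 : 0 < t := by linarith [ht.1]
      have := H.bd t ht0
      rw [Real.norm_eq_abs, show t⁻¹ * I0 N t - κ = t⁻¹ * (I0 N t - κ * t) by field_simp,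
        abs_mul, abs_of_pos (by positivity), Real.rpow_sub_one ht0.ne']
      calc t⁻¹ * |I0 N t - κ * t| ≤ t⁻¹ * (K * t ^ τ) :=
            mul_le_mul_of_nonneg_left this (by positivity)
        _ = _ := by ring
    · rw [intervalIntegral.integral_const_mul, integral_rpow (Or.inl (by linarith))]
      simp only [sub_add_cancel, Real.one_rpow]
      have : K / τ * x ^ τ - K * ((x ^ τ - 1) / τ) = K / τ := by field_simp; ring
      have : 0 ≤ K / τ := by positivity
      linarith
  have hR := H.bd x hx0
  have hlog : Real.log x ≤ x ^ ((1 - τ) / 2) / ((1 - τ) / 2) :=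
    Real.log_le_rpow_div hx0.le (by linarith)
  have hlog0 : 0 ≤ Real.log x := Real.log_nonneg hx
  have h1 : |Real.log x * (I0 N x - κ * x)| ≤ K * (2 / (1 - τ)) * x ^ ((1 + τ) / 2) := by
    rw [abs_mul, abs_of_nonneg hlog0]
    calc Real.log x * |I0 N x - κ * x| ≤ (x ^ ((1 - τ) / 2) / ((1 - τ) / 2)) * (K * x ^ τ) :=
          mul_le_mul hlog hR (abs_nonneg _) (hlog0.trans hlog)
      _ = K * (2 / (1 - τ)) * (x ^ ((1 - τ) / 2) * x ^ τ) := by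
        have : 1 - τ ≠ 0 := by linarith
        field_simp
      _ = _ := by rw [← Real.rpow_add hx0]; congr 2; ring
  have h2 : x ^ τ ≤ x ^ ((1 + τ) / 2) := Real.rpow_le_rpow_of_exponent_le hx (by linarith)
  have h3 : 1 ≤ x ^ ((1 + τ) / 2) := Real.one_le_rpow hx (by linarith)
  have e : Tsum N x - κ * x * Real.log x + κ * x = Real.log x * (I0 N x - κ * x) + κ -
     ((∫ t in (1:ℝ)..x, t⁻¹ * I0 N t) - κ * (x - 1)) := by rw [b']; ring
  rw [e]
  have h4 : K / τ * x ^ τ ≤ K / τ * x ^ ((1 + τ) / 2) :=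
    mul_le_mul_of_nonneg_left h2 (by positivity)
  have h5 := abs_sub (Real.log x * (I0 N x - κ * x) + κ)
     ((∫ t in (1:ℝ)..x, t⁻¹ * I0 N t) - κ * (x - 1))
  have h6 := abs_add_le (Real.log x * (I0 N x - κ * x)) κ
  rw [abs_of_pos hκ] at h6
  nlinarith

lemma I0_mono (H : Sys N κ τ K) : Monotone (I0 N) := by
  intro x y hxy
  exact Finset.sum_le_sum_of_subset_of_nonneg (lev_mono H.fin hxy) (by intros; norm_num)

lemma recip_bound (H : Sys N κ τ K) : ∃ c C, 0 ≤ C ∧ ∀ x, 1 ≤ x →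
    |∑ m ∈ lev (rn N) x, (rn N m)⁻¹ - κ * Real.log x - c| ≤ C * x ^ (τ - 1) := by
  have hτ0 := H.hτ0
  have hτ1 := H.hτ1
  have hK := H.hK
  have hκ := H.hκ
  set g : ℝ → ℝ := fun t => (t ^ 2)⁻¹ * (I0 N t - κ * t) with hg
  have hgm : Measurable g := by
    apply Measurable.mul
    · fun_prop
    · exact (I0_mono H).measurable.sub (by fun_prop)
  have hgb : ∀ t, 1 ≤ t → ‖g t‖ ≤ K * t ^ (τ - 2) := by
    intro t ht
    have ht0 : 0 < t := by linarith
    have := H.bd t ht0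
    rw [hg, Real.norm_eq_abs, abs_mul, abs_of_pos (by positivity), Real.rpow_sub ht0]
    norm_num
    calc (t ^ 2)⁻¹ * |I0 N t - κ * t| ≤ (t ^ 2)⁻¹ * (K * t ^ τ) :=
            mul_le_mul_of_nonneg_left this (by positivity)
        _ = _ := by ring
  have hpI : ∀ x, 1 ≤ x → MeasureTheory.IntegrableOn (fun t : ℝ => K * t ^ (τ - 2)) (Set.Ioi x) :=
    fun x hx => (integrableOn_Ioi_rpow_of_lt (by linarith) (by linarith)).const_mul K
  have hgI : ∀ x, 1 ≤ x → MeasureTheory.IntegrableOn g (Set.Ioi x) := by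
    intro x hx
    refine (hpI x hx).mono' hgm.aestronglyMeasurable ?_
    rw [MeasureTheory.ae_restrict_iff' measurableSet_Ioi]
    exact Eventually.of_forall fun t ht => hgb t (hx.trans (le_of_lt ht))
  refine ⟨κ + ∫ t in Set.Ioi 1, g t, K + K / (1 - τ), ?_, ?_⟩
  · have : 0 < 1 - τ := by linarith
    positivity
  intro x hx
  have hx0 : 0 < x := by linarith
  have hinv : ContinuousOn (fun t : ℝ => -(t ^ 2)⁻¹) (Set.Icc 1 x) := by
    apply ContinuousOn.neg
    apply ContinuousOn.inv₀ (by fun_prop)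
    intro t ht; have := ht.1; positivity
  obtain ⟨a, b⟩ := abel_lev (rn N) (fun _ => 1) H.fin (rn_one_le H.two) (fun t => t⁻¹)
    (fun t => -(t ^ 2)⁻¹) x hx
    (fun t ht => hasDerivAt_inv (by linarith [ht.1])) hinv
  have b' : ∑ m ∈ lev (rn N) x, (rn N m)⁻¹ =
      x⁻¹ * I0 N x - ∫ t in (1:ℝ)..x, -(t ^ 2)⁻¹ * I0 N t := by
    unfold I0; rw [← b]; simp
  have hiv : IntervalIntegrable (fun t : ℝ => κ * t⁻¹) MeasureTheory.volume 1 x := by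
    apply ContinuousOn.intervalIntegrable
    rw [Set.uIcc_of_le hx]
    exact continuousOn_const.mul
      (fun t ht => (continuousAt_inv₀ (by linarith [ht.1])).continuousWithinAt)
  have e1 : ∫ t in (1:ℝ)..x, g t = -(∫ t in (1:ℝ)..x, -(t ^ 2)⁻¹ * I0 N t) - κ * Real.log x := by
    have : κ * Real.log x = ∫ t in (1:ℝ)..x, κ * t⁻¹ := by
      rw [intervalIntegral.integral_const_mul, integral_inv_of_pos one_pos hx0]; simp
    rw [this, ← intervalIntegral.integral_neg, ← intervalIntegral.integral_sub
      (f := fun t : ℝ => -(-(t ^ 2)⁻¹ * I0 N t)) a.neg hiv]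
    apply intervalIntegral.integral_congr
    intro t ht
    rw [Set.uIcc_of_le hx] at ht
    have : 0 < t := by linarith [ht.1]
    simp only [hg]
    field_simp
  have e2 := intervalIntegral.integral_interval_add_Ioi (hgI 1 le_rfl) (hgI x hx)
  have e3 : ∑ m ∈ lev (rn N) x, (rn N m)⁻¹ - κ * Real.log x - (κ + ∫ t in Set.Ioi 1, g t) =
      x⁻¹ * (I0 N x - κ * x) - ∫ t in Set.Ioi x, g t := by
    rw [b', ← e2, e1]; field_simp; ring
  rw [e3]
  have h1 : |x⁻¹ * (I0 N x - κ * x)| ≤ K * x ^ (τ - 1) := by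
    rw [abs_mul, abs_of_pos (by positivity), Real.rpow_sub_one hx0.ne']
    calc x⁻¹ * |I0 N x - κ * x| ≤ x⁻¹ * (K * x ^ τ) :=
            mul_le_mul_of_nonneg_left (H.bd x hx0) (by positivity)
        _ = _ := by ring
  have h2 : |∫ t in Set.Ioi x, g t| ≤ K / (1 - τ) * x ^ (τ - 1) := by
    rw [← Real.norm_eq_abs]
    refine (MeasureTheory.norm_integral_le_of_norm_le (hpI x hx) ?_).trans ?_
    · rw [MeasureTheory.ae_restrict_iff' measurableSet_Ioi]
      exact Eventually.of_forall fun t ht => hgb t (hx.trans (le_of_lt ht))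
    · rw [MeasureTheory.integral_const_mul, integral_Ioi_rpow_of_lt (by linarith) hx0]
      apply le_of_eq
      rw [show τ - 2 + 1 = τ - 1 by ring]
      have : 1 - τ ≠ 0 := by linarith
      have : τ - 1 ≠ 0 := by linarith
      field_simp
      ring
  rw [add_mul]
  exact (abs_sub _ _).trans (add_le_add h1 h2)

/-- psi function -/
def psi (N : P → ℕ) (x : ℝ) : ℝ := ∑ i ∈ lev (qn N) x, Real.log (N i.1)

lemma log_rn (hN : ∀ p, 2 ≤ N p) (m : P →₀ ℕ) : Real.log (rn N m) =
    ∑ p ∈ m.support, m p * Real.log (N p) := by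
  unfold rn Nm Finsupp.prod
  push_cast
  rw [Real.log_prod]
  · simp
  · intro p _; have := hN p; positivity

lemma qn_one_le (hN : ∀ p, 2 ≤ N p) (i : P × ℕ) : 1 ≤ qn N i := rn_one_le hN _

lemma T_eq (H : Sys N κ τ K) (x : ℝ) :
    Tsum N x = ∑ i ∈ lev (qn N) x, Real.log (N i.1) * I0 N (x / qn N i) := by
  have h1 : ∀ m ∈ lev (rn N) x, Real.log (rn N m) =
      ∑ i ∈ lev (qn N) x, if Finsupp.single i.1 (i.2 + 1) ≤ m then Real.log (N i.1) else 0 := by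
    intro m hm
    rw [log_rn H.two, ← Finset.sum_filter]
    have : (Finset.filter (fun i : P × ℕ => Finsupp.single i.1 (i.2 + 1) ≤ m) (lev (qn N) x)) =
       (m.support.sigma (fun p => Finset.range (m p))).map (Equiv.sigmaEquivProd P ℕ).toEmbedding := by
      ext ⟨p, k⟩
      simp only [Finset.mem_filter, mem_lev (fin_qn H.fin), Finset.mem_map_equiv,
        Finset.mem_sigma, Finset.mem_range, Finsupp.mem_support_iff, Finsupp.single_le_iff]
      simp only [Equiv.sigmaEquivProd, Equiv.coe_fn_symm_mk]
      constructor
      · rintro ⟨_, h⟩; constructor <;> omega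
      · rintro ⟨_, h⟩
        refine ⟨?_, by omega⟩
        rw [mem_lev H.fin] at hm
        refine le_trans ?_ hm
        have hle : Finsupp.single p (k + 1) ≤ m := Finsupp.single_le_iff.2 h
        rw [← tsub_add_cancel_of_le hle, rn_add]
        have h1 := rn_one_le H.two (m - Finsupp.single p (k + 1))
        have h2 := rn_pos H.two (Finsupp.single p (k + 1))
        simp only [qn]
        nlinarith
    rw [this, Finset.sum_map, Finset.sum_sigma]
    simp
  unfold Tsum
  rw [Finset.sum_congr rfl h1, Finset.sum_comm]
  apply Finset.sum_congr rfl
  intro i _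
  rw [← Finset.sum_filter, shift H.two H.fin]
  simp [I0, qn, mul_comm]

lemma T_psi (H : Sys N κ τ K) (x : ℝ) :
    Tsum N x = ∑ m ∈ lev (rn N) x, psi N (x / rn N m) := by
  rw [T_eq H]
  unfold I0 psi
  simp only [Finset.mul_sum, mul_one]
  apply Finset.sum_comm'
  intro i m
  rw [mem_lev H.fin, mem_lev H.fin, mem_lev (fin_qn H.fin), mem_lev (fin_qn H.fin)]
  have a := qn_one_le H.two i
  have b := rn_one_le H.two m
  rw [le_div_iff₀ (by linarith), le_div_iff₀ (by linarith)]
  constructor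
  · rintro ⟨_, h⟩; constructor <;> nlinarith
  · rintro ⟨h, _⟩; constructor <;> nlinarith

lemma moebius (H : Sys N κ τ K) (x : ℝ) (hx : 1 ≤ x) (g : (P →₀ ℕ) → ℝ) :
    g 0 = ∑ S ∈ lev (sn N) x, (-1) ^ S.card * ∑ m ∈ lev (rn N) (x / sn N S), g (m + ind S) := by
  have h1 : ∀ S ∈ lev (sn N) x, (-1:ℝ) ^ S.card * ∑ m ∈ lev (rn N) (x / sn N S), g (m + ind S) =
     ∑ m ∈ lev (rn N) x, if ind S ≤ m then (-1) ^ S.card * g m else 0 := by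
    intro S _
    rw [sn, ← shift H.two H.fin, Finset.mul_sum, Finset.sum_filter]
  rw [Finset.sum_congr rfl h1, Finset.sum_comm]
  have h2 : ∀ m ∈ lev (rn N) x, (∑ S ∈ lev (sn N) x, if ind S ≤ m then (-1) ^ S.card * g m else 0) =
      if m = 0 then g m else 0 := by
    intro m hm
    rw [← Finset.sum_filter]
    have : (lev (sn N) x).filter (fun S => ind S ≤ m) = m.support.powerset := by
      ext S
      simp only [Finset.mem_filter, mem_lev (fin_sn H.fin), Finset.mem_powerset]
      have hiff : ind S ≤ m ↔ S ⊆ m.support := by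
        constructor
        · intro h p hp
          have := h p
          rw [ind_apply, if_pos hp] at this
          rw [Finsupp.mem_support_iff]; omega
        · intro h p
          rw [ind_apply]
          split_ifs with hp
          · have := h hp
            rw [Finsupp.mem_support_iff] at this; omega
          · omega
      rw [hiff]
      constructor
      · exact fun h => h.2
      · intro h
        refine ⟨?_, h⟩
        rw [← hiff] at h
        rw [mem_lev H.fin] at hm
        refine le_trans ?_ hm
        rw [← tsub_add_cancel_of_le h, rn_add]
        have h1 := rn_one_le H.two (m - ind S)
        have h2 := rn_pos H.two (ind S)
        simp only [sn]
        nlinarith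
    rw [this, ← Finset.sum_mul]
    have h3 : ∑ S ∈ m.support.powerset, (-1:ℝ) ^ S.card = if m.support = ∅ then 1 else 0 := by
      have := Finset.sum_powerset_neg_one_pow_card (x := m.support)
      have h4 := congrArg (Int.cast : ℤ → ℝ) this
      push_cast at h4
      convert h4 using 1
    rw [h3]
    by_cases h0 : m = 0
    · simp [h0]
    · rw [if_neg h0, if_neg (by rwa [Finsupp.support_eq_empty]), zero_mul]
  rw [Finset.sum_congr rfl h2, Finset.sum_ite_eq', if_pos]
  rw [mem_lev H.fin, rn_zero]; exact hx

lemma rn_neg_sum (H : Sys N κ τ K) (σ : ℝ) (hσ0 : 0 < σ) (hσ : σ < 1) :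
    ∃ C, 0 ≤ C ∧ ∀ x, 1 ≤ x → ∑ m ∈ lev (rn N) x, rn N m ^ (-σ) ≤ C * x ^ (1 - σ) := by
  have h0 : 0 ≤ κ + K := by linarith [H.hκ, H.hK]
  refine ⟨(κ + K) / (1 - σ), div_nonneg h0 (by linarith), ?_⟩
  intro x hx
  have := abel_upper_lt (rn N) (fun _ => 1) H.fin (rn_one_le H.two) (κ + K) h0
    (fun t ht => H.I0_le t ht) σ hσ0 hσ x hx
  simpa using this

lemma rn_summable (H : Sys N κ τ K) (σ : ℝ) (hσ : 1 < σ) : Summable (fun m => rn N m ^ (-σ)) := by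
  have h0 : 0 ≤ κ + K := by linarith [H.hκ, H.hK]
  apply summable_of_lev (rn N) _ H.fin (fun m => Real.rpow_nonneg (rn_pos H.two m).le _)
    (κ + K + (κ + K) * σ / (σ - 1))
  intro x hx
  have := abel_upper_gt (rn N) (fun _ => 1) H.fin (rn_one_le H.two) (κ + K) h0
    (fun t ht => H.I0_le t ht) σ hσ x hx
  simpa using this

lemma psi_bound (H : Sys N κ τ K) : ∃ C, 0 ≤ C ∧ ∀ x, 1 ≤ x → psi N x ≤ C * x := by
  have hτ0 := H.hτ0
  have hτ1 := H.hτ1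
  have hκ := H.hκ
  have hK := H.hK
  obtain ⟨C1, hC1, hT⟩ := T_bound H
  obtain ⟨c, C2, hC2, hR⟩ := recip_bound H
  set ρ := (1 + τ) / 2 with hρ
  obtain ⟨C3, hC3, hS⟩ := rn_neg_sum H ρ (by linarith) (by linarith)
  set C := 1 + c / κ with hC
  set h : ℝ → ℝ := fun z => psi N z - z + C with hh
  set B := C1 + C2 + |C| * K with hB
  have hB0 : 0 ≤ B := by positivity
  have hH : ∀ z, 1 ≤ z → |∑ m ∈ lev (rn N) z, h (z / rn N m)| ≤ B * z ^ ρ := by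
    intro z hz
    have hz0 : 0 < z := by linarith
    have e : ∑ m ∈ lev (rn N) z, h (z / rn N m) =
        Tsum N z - z * ∑ m ∈ lev (rn N) z, (rn N m)⁻¹ + C * I0 N z := by
      rw [T_psi H]
      simp only [hh, I0, div_eq_mul_inv, Finset.sum_add_distrib, Finset.sum_sub_distrib,
        Finset.mul_sum, mul_one]
    have e2 : ∑ m ∈ lev (rn N) z, h (z / rn N m) =
        (Tsum N z - κ * z * Real.log z + κ * z) -
        z * (∑ m ∈ lev (rn N) z, (rn N m)⁻¹ - κ * Real.log z - c) + C * (I0 N z - κ * z) := by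
      rw [e, hC]; field_simp; ring
    have h1 := hT z hz
    have h2 := hR z hz
    have h3 := H.bd z hz0
    have hzz : z ^ τ ≤ z ^ ρ := Real.rpow_le_rpow_of_exponent_le hz (by linarith)
    have h2' : |z * (∑ m ∈ lev (rn N) z, (rn N m)⁻¹ - κ * Real.log z - c)| ≤ C2 * z ^ ρ := by
      rw [abs_mul, abs_of_pos hz0]
      calc _ ≤ z * (C2 * z ^ (τ - 1)) := mul_le_mul_of_nonneg_left h2 hz0.le
        _ = C2 * z ^ τ := by rw [Real.rpow_sub_one hz0.ne']; field_simp
        _ ≤ _ := mul_le_mul_of_nonneg_left hzz hC2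
    have h3' : |C * (I0 N z - κ * z)| ≤ |C| * K * z ^ ρ := by
      rw [abs_mul, mul_assoc]
      apply mul_le_mul_of_nonneg_left _ (abs_nonneg _)
      exact h3.trans (mul_le_mul_of_nonneg_left hzz hK)
    rw [e2, hB]
    refine (abs_add_le _ _).trans ?_
    have := (abs_sub (Tsum N z - κ * z * Real.log z + κ * z) (z * (∑ m ∈ lev (rn N) z, (rn N m)⁻¹ - κ * Real.log z - c)))
    linarith
  refine ⟨B * C3 + 1 + |C|, by positivity, ?_⟩
  intro x hx
  have hx0 : 0 < x := by linarith
  have hm := moebius H x hx (fun m => h (x / rn N m))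
  simp only [rn_zero, div_one] at hm
  have hb : |h x| ≤ B * C3 * x := by
    rw [hm]
    refine (Finset.abs_sum_le_sum_abs _ _).trans ?_
    have : ∀ S ∈ lev (sn N) x, |(-1) ^ S.card * ∑ m ∈ lev (rn N) (x / sn N S),
        h (x / rn N (m + ind S))| ≤ B * x ^ ρ * sn N S ^ (-ρ) := by
      intro S hS
      rw [mem_lev (fin_sn H.fin)] at hS
      have hS0 : 0 < sn N S := rn_pos H.two _
      rw [abs_mul, abs_pow, abs_neg, abs_one, one_pow, one_mul]
      have := hH (x / sn N S) ((one_le_div hS0).2 hS)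
      have e : ∑ m ∈ lev (rn N) (x / sn N S), h (x / rn N (m + ind S)) =
          ∑ m ∈ lev (rn N) (x / sn N S), h (x / sn N S / rn N m) := by
        apply Finset.sum_congr rfl
        intro m _
        rw [rn_add, div_div, mul_comm]; rfl
      rw [e]
      refine this.trans (le_of_eq ?_)
      rw [Real.div_rpow hx0.le hS0.le, Real.rpow_neg hS0.le]; ring
    refine (Finset.sum_le_sum this).trans ?_
    rw [← Finset.mul_sum]
    have h5 : ∑ S ∈ lev (sn N) x, sn N S ^ (-ρ) ≤ ∑ m ∈ lev (rn N) x, rn N m ^ (-ρ) := by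
      have : ∑ S ∈ lev (sn N) x, sn N S ^ (-ρ) =
         ∑ m ∈ (lev (sn N) x).image ind, rn N m ^ (-ρ) := by
        rw [Finset.sum_image (ind_inj.injOn)]; rfl
      rw [this]
      apply Finset.sum_le_sum_of_subset_of_nonneg
      · intro m hm
        rw [Finset.mem_image] at hm
        obtain ⟨S, hS, rfl⟩ := hm
        rw [mem_lev (fin_sn H.fin)] at hS
        rw [mem_lev H.fin]; exact hS
      · intro m _ _; exact Real.rpow_nonneg (rn_pos H.two m).le _
    calc _ ≤ B * x ^ ρ * (C3 * x ^ (1 - ρ)) := by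
          apply mul_le_mul_of_nonneg_left (h5.trans (hS x hx)); positivity
      _ = B * C3 * (x ^ ρ * x ^ (1 - ρ)) := by ring
      _ = B * C3 * x := by rw [← Real.rpow_add hx0]; simp
  have h6 := (abs_le.1 hb).2
  simp only [hh] at h6
  have h7 := neg_abs_le C
  have h8 := abs_nonneg C
  nlinarith
end

section
variable {P : Type*} {N : P → ℕ} {κ τ K : ℝ}

lemma pn_pos (hN : ∀ p, 2 ≤ N p) (p : P) : 0 < pn N p := by linarith [pn_two hN p]

lemma log_pn_pos (hN : ∀ p, 2 ≤ N p) (p : P) : 0 < Real.log (pn N p) :=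
  Real.log_pos (by linarith [pn_two hN p])

lemma pn_summable (H : Sys N κ τ K) (σ : ℝ) (hσ : 1 < σ) : Summable (fun p => pn N p ^ (-σ)) := by
  have := (rn_summable H σ hσ).comp_injective
    (Finsupp.single_left_injective (α := P) (one_ne_zero (α := ℕ)))
  simpa only [Function.comp_def, ← pn_single] using this

lemma mert_log (H : Sys N κ τ K) : ∃ C, 0 ≤ C ∧ ∀ x, 1 ≤ x →
    |∑ p ∈ lev (pn N) x, (pn N p)⁻¹ * Real.log (pn N p) - Real.log x| ≤ C := by
  have hτ0 := H.hτ0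
  have hτ1 := H.hτ1
  have hκ := H.hκ
  have hK := H.hK
  obtain ⟨C1, hC1, hT⟩ := T_bound H
  obtain ⟨C2, hC2, hpsi⟩ := psi_bound H
  have hlog0 : ∀ p : P, 0 ≤ Real.log (pn N p) := fun p => (log_pn_pos H.two p).le
  set g : P × ℕ → ℝ := fun i => if i.2 = 0 then 0 else Real.log (pn N i.1) * (qn N i)⁻¹ with hg
  have hg0 : ∀ i, 0 ≤ g i := by
    intro i
    simp only [hg]
    split_ifs
    · exact le_rfl
    · exact mul_nonneg (hlog0 _) (inv_nonneg.2 (by linarith [qn_one_le H.two i]))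
  have hgs : Summable g := by
    have h1 := (pn_summable H (3/2) (by norm_num))
    have h2 := summable_geometric_of_lt_one (r := (1:ℝ)/2) (by norm_num) (by norm_num)
    have h3 := (h1.mul_of_nonneg h2 (fun p => Real.rpow_nonneg (pn_pos H.two p).le _)
      (fun k => by positivity)).mul_left 4
    refine Summable.of_nonneg_of_le hg0 ?_ h3
    rintro ⟨p, k⟩
    simp only [hg]
    have hp := pn_pos H.two p
    have hp2 := pn_two H.two p
    split_ifs with hk
    · positivity
    · obtain ⟨j, rfl⟩ := Nat.exists_eq_succ_of_ne_zero hk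
      rw [qn_eq]
      change Real.log (pn N p) * (pn N p ^ (j + 1 + 1))⁻¹ ≤ _
      have hl : Real.log (pn N p) ≤ 2 * pn N p ^ (1/2:ℝ) := by
        have := Real.log_le_rpow_div hp.le (by norm_num : (0:ℝ) < 1/2)
        linarith
      have e1 : pn N p ^ (1/2:ℝ) * (pn N p ^ 2)⁻¹ = pn N p ^ (-(3/2):ℝ) := by
        rw [← Real.rpow_natCast, ← Real.rpow_neg hp.le, ← Real.rpow_add hp]; norm_num
      have e2 : (pn N p ^ j)⁻¹ ≤ (1/2) ^ j := by
        rw [one_div, inv_pow]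
        exact inv_anti₀ (by positivity) (pow_le_pow_left₀ (by norm_num) hp2 j)
      calc Real.log (pn N p) * (pn N p ^ (j + 1 + 1))⁻¹
          ≤ (2 * pn N p ^ (1/2:ℝ)) * (pn N p ^ (j + 1 + 1))⁻¹ :=
            mul_le_mul_of_nonneg_right hl (by positivity)
        _ = 2 * (pn N p ^ (1/2:ℝ) * (pn N p ^ 2)⁻¹) * (pn N p ^ j)⁻¹ := by
            field_simp; ring
        _ ≤ 2 * (pn N p ^ (1/2:ℝ) * (pn N p ^ 2)⁻¹) * (1/2) ^ j :=
            mul_le_mul_of_nonneg_left e2 (by positivity)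
        _ = 4 * (pn N p ^ (-(3/2):ℝ) * (1/2) ^ (j + 1)) := by rw [e1]; ring
  refine ⟨(K * (C2 / (1 - τ)) + C1 + κ) / κ + ∑' i, g i, ?_, ?_⟩
  · have : 0 < 1 - τ := by linarith
    have : 0 ≤ ∑' i, g i := tsum_nonneg hg0
    positivity
  intro x hx
  have hx0 : 0 < x := by linarith
  -- split
  have hsplit : ∑ i ∈ lev (qn N) x, Real.log (pn N i.1) * (qn N i)⁻¹ =
      ∑ p ∈ lev (pn N) x, (pn N p)⁻¹ * Real.log (pn N p) + ∑ i ∈ lev (qn N) x, g i := by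
    rw [← Finset.sum_filter_add_sum_filter_not (lev (qn N) x) (fun i => i.2 = 0)]
    congr 1
    · have : (lev (qn N) x).filter (fun i => i.2 = 0) = (lev (pn N) x).image (fun p => (p, 0)) := by
        ext ⟨p, k⟩
        simp only [Finset.mem_filter, Finset.mem_image, mem_lev (fin_qn H.fin),
          mem_lev (fin_pn H.fin), Prod.mk.injEq]
        constructor
        · rintro ⟨h1, rfl⟩
          refine ⟨p, ?_, rfl, rfl⟩
          rw [qn_eq] at h1; simpa [pn] using h1
        · rintro ⟨q, h1, rfl, rfl⟩
          refine ⟨?_, rfl⟩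
          rw [qn_eq]; simpa [pn] using h1
      rw [this, Finset.sum_image (fun a _ b _ h => (Prod.mk.inj h).1)]
      apply Finset.sum_congr rfl
      intro p _
      rw [qn_eq, zero_add, pow_one, mul_comm]; rfl
    · rw [Finset.sum_filter]
      apply Finset.sum_congr rfl
      intro i _
      simp only [hg]
      by_cases h : i.2 = 0 <;> simp [h]
  have hg1 : ∑ i ∈ lev (qn N) x, g i ≤ ∑' i, g i := hgs.sum_le_tsum _ (fun i _ => hg0 i)
  have hg2 : 0 ≤ ∑ i ∈ lev (qn N) x, g i := Finset.sum_nonneg (fun i _ => hg0 i)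
  have hU := abel_upper_lt (qn N) (fun i => Real.log (pn N i.1)) (fin_qn H.fin) (qn_one_le H.two) C2 hC2
    (fun t ht => hpsi t ht) τ hτ0 hτ1 x hx
  have hA : |Tsum N x - κ * x * ∑ i ∈ lev (qn N) x, Real.log (pn N i.1) * (qn N i)⁻¹| ≤
      K * (C2 / (1 - τ)) * x := by
    rw [T_eq H, Finset.mul_sum, ← Finset.sum_sub_distrib]
    refine (Finset.abs_sum_le_sum_abs _ _).trans ?_
    have : ∀ i ∈ lev (qn N) x, |Real.log (N i.1) * I0 N (x / qn N i) -
        κ * x * (Real.log (pn N i.1) * (qn N i)⁻¹)| ≤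
        K * x ^ τ * (Real.log (pn N i.1) * qn N i ^ (-τ)) := by
      intro i _
      have hq : 0 < qn N i := by linarith [qn_one_le H.two i]
      have h1 := H.bd (x / qn N i) (by positivity)
      change |Real.log (pn N i.1) * I0 N (x / qn N i) -
        κ * x * (Real.log (pn N i.1) * (qn N i)⁻¹)| ≤ _
      rw [show Real.log (pn N i.1) * I0 N (x / qn N i) - κ * x * (Real.log (pn N i.1) * (qn N i)⁻¹) =
        Real.log (pn N i.1) * (I0 N (x / qn N i) - κ * (x / qn N i)) by rw [div_eq_mul_inv]; ring,
        abs_mul, abs_of_nonneg (hlog0 _)]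
      refine (mul_le_mul_of_nonneg_left h1 (hlog0 _)).trans (le_of_eq ?_)
      rw [Real.div_rpow hx0.le hq.le, Real.rpow_neg hq.le]; ring
    refine (Finset.sum_le_sum this).trans ?_
    rw [← Finset.mul_sum]
    calc _ ≤ K * x ^ τ * (C2 / (1 - τ) * x ^ (1 - τ)) := by
          apply mul_le_mul_of_nonneg_left hU; positivity
      _ = K * (C2 / (1 - τ)) * (x ^ τ * x ^ (1 - τ)) := by ring
      _ = _ := by rw [← Real.rpow_add hx0]; simp
  have hB : |Tsum N x - κ * x * Real.log x| ≤ (C1 + κ) * x := by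
    have h1 := hT x hx
    have h2 : x ^ ((1 + τ) / 2) ≤ x := by
      conv_rhs => rw [← Real.rpow_one x]
      exact Real.rpow_le_rpow_of_exponent_le hx (by linarith)
    have h3 := mul_le_mul_of_nonneg_left h2 hC1
    rw [abs_le] at h1 ⊢
    have : 0 < κ * x := by positivity
    constructor <;> nlinarith
  have hM : |∑ i ∈ lev (qn N) x, Real.log (pn N i.1) * (qn N i)⁻¹ - Real.log x| ≤
     (K * (C2 / (1 - τ)) + C1 + κ) / κ := by
    rw [le_div_iff₀ hκ]
    have h1 : |κ * x * (∑ i ∈ lev (qn N) x, Real.log (pn N i.1) * (qn N i)⁻¹ - Real.log x)| ≤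
      (K * (C2 / (1 - τ)) + C1 + κ) * x := by
      rw [abs_le] at hA hB ⊢
      constructor <;> nlinarith
    rw [abs_mul, abs_of_pos (by positivity)] at h1
    nlinarith
  rw [hsplit] at hM
  rw [abs_le] at hM ⊢
  have : 0 ≤ ∑' i, g i := tsum_nonneg hg0
  constructor <;> linarith

lemma prime_neg_sum (H : Sys N κ τ K) (σ : ℝ) (hσ0 : 0 < σ) (hσ : σ < 1) :
    ∃ C, 0 ≤ C ∧ ∀ z, 2 ≤ z → ∑ p ∈ lev (pn N) z, pn N p ^ (-σ) ≤ C * (z ^ (1 - σ) / Real.log z) := by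
  obtain ⟨C3, hC3, hS⟩ := rn_neg_sum H σ hσ0 hσ
  obtain ⟨C2, hC2, hpsi⟩ := psi_bound H
  have h1σ : 0 < 1 - σ := by linarith
  have hth : ∀ t, 1 ≤ t → ∑ p ∈ lev (pn N) t, Real.log (pn N p) ≤ C2 * t := by
    intro t ht
    refine le_trans ?_ (hpsi t ht)
    unfold psi
    have : ∑ p ∈ lev (pn N) t, Real.log (pn N p) =
        ∑ i ∈ (lev (pn N) t).image (fun p => ((p, 0) : P × ℕ)), Real.log (N i.1) := by
      rw [Finset.sum_image (fun a _ b _ h => (Prod.mk.inj h).1)]; rfl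
    rw [this]
    apply Finset.sum_le_sum_of_subset_of_nonneg
    · intro i hi
      rw [Finset.mem_image] at hi
      obtain ⟨p, hp, rfl⟩ := hi
      rw [mem_lev (fin_pn H.fin)] at hp
      rw [mem_lev (fin_qn H.fin), qn_eq]; simpa [pn] using hp
    · intro i _ _; exact (log_pn_pos H.two i.1).le
  refine ⟨C3 * (2 / (1 - σ)) + 2 * (C2 / (1 - σ)), by positivity, ?_⟩
  intro z hz
  have hz0 : 0 < z := by linarith
  have hlz : 0 < Real.log z := Real.log_pos (by linarith)
  have hU := abel_upper_lt (pn N) (fun p => Real.log (pn N p)) (fin_pn H.fin)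
    (fun p => by linarith [pn_two H.two p]) C2 hC2 hth σ hσ0 hσ z (by linarith)
  have hpt : ∀ p ∈ lev (pn N) z, pn N p ^ (-σ) ≤ (if pn N p ≤ z ^ (1/2:ℝ) then pn N p ^ (-σ) else 0) +
      2 / Real.log z * (Real.log (pn N p) * pn N p ^ (-σ)) := by
    intro p _
    have hp := pn_pos H.two p
    have hpp : 0 < pn N p ^ (-σ) := Real.rpow_pos_of_pos hp _
    have hl := log_pn_pos H.two p
    split_ifs with hc
    · have : 0 ≤ 2 / Real.log z * (Real.log (pn N p) * pn N p ^ (-σ)) := by positivity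
      linarith
    · push Not at hc
      have h1 : Real.log (z ^ (1/2:ℝ)) < Real.log (pn N p) :=
        Real.log_lt_log (Real.rpow_pos_of_pos hz0 _) hc
      rw [Real.log_rpow hz0] at h1
      have h2 : 1 ≤ 2 / Real.log z * Real.log (pn N p) := by
        rw [div_mul_eq_mul_div, one_le_div hlz]; linarith
      nlinarith
  refine (Finset.sum_le_sum hpt).trans ?_
  rw [Finset.sum_add_distrib, ← Finset.mul_sum, add_mul]
  apply add_le_add
  · rw [← Finset.sum_filter]
    have hs1 : 1 ≤ z ^ (1/2:ℝ) := Real.one_le_rpow (by linarith) (by norm_num)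
    have h1 : ∑ p ∈ lev (pn N) z with pn N p ≤ z ^ (1/2:ℝ), pn N p ^ (-σ) ≤
        ∑ m ∈ lev (rn N) (z ^ (1/2:ℝ)), rn N m ^ (-σ) := by
      have : ∑ p ∈ lev (pn N) z with pn N p ≤ z ^ (1/2:ℝ), pn N p ^ (-σ) =
        ∑ m ∈ ((lev (pn N) z).filter (fun p => pn N p ≤ z ^ (1/2:ℝ))).image
          (fun p => Finsupp.single p 1), rn N m ^ (-σ) := by
        rw [Finset.sum_image (Finsupp.single_left_injective one_ne_zero).injOn]
        simp only [pn_single]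
      rw [this]
      apply Finset.sum_le_sum_of_subset_of_nonneg
      · intro i hi
        rw [Finset.mem_image] at hi
        obtain ⟨p, hp, rfl⟩ := hi
        rw [Finset.mem_filter] at hp
        rw [mem_lev H.fin, ← pn_single]; exact hp.2
      · intro i _ _; exact Real.rpow_nonneg (rn_pos H.two _).le _
    refine (h1.trans (hS _ hs1)).trans ?_
    rw [← Real.rpow_mul hz0.le, mul_assoc]
    apply mul_le_mul_of_nonneg_left _ hC3
    rw [mul_div_assoc', le_div_iff₀ hlz]
    have hl : Real.log z ≤ z ^ ((1 - σ)/2) / ((1 - σ)/2) :=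
      Real.log_le_rpow_div hz0.le (by linarith)
    calc z ^ (1 / 2 * (1 - σ)) * Real.log z ≤
        z ^ (1 / 2 * (1 - σ)) * (z ^ ((1 - σ)/2) / ((1 - σ)/2)) :=
          mul_le_mul_of_nonneg_left hl (Real.rpow_nonneg hz0.le _)
      _ = 2 / (1 - σ) * (z ^ (1 / 2 * (1 - σ)) * z ^ ((1 - σ)/2)) := by field_simp
      _ = _ := by rw [← Real.rpow_add hz0]; congr 2; ring
  · calc _ ≤ 2 / Real.log z * (C2 / (1 - σ) * z ^ (1 - σ)) :=
          mul_le_mul_of_nonneg_left hU (by positivity)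
      _ = _ := by ring
end

section
variable {ι : Type*} {ν f : ι → ℝ} {C : ℝ}

/-- weighted prime system -/
structure Wt (ν f : ι → ℝ) (C : ℝ) : Prop where
  fin : ∀ x, {i | ν i ≤ x}.Finite
  two : ∀ i, 2 ≤ ν i
  nn : ∀ i, 0 ≤ f i
  hC : 0 ≤ C
  bd : ∀ x, 1 ≤ x → |∑ i ∈ lev ν x, f i * Real.log (ν i) - Real.log x| ≤ C

lemma abel_compare (W : Wt ν f C) (g g' G : ℝ → ℝ) (σ a x : ℝ) (ha : 1 ≤ a) (hax : a ≤ x)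
    (hg : ∀ t ∈ Set.Icc a x, HasDerivAt g (g' t) t) (hg' : ContinuousOn g' (Set.Icc a x))
    (hσ : ∀ t ∈ Set.Icc a x, |g' t| = σ * g' t)
    (hG : ∀ t ∈ Set.Icc a x, HasDerivAt G (g t / t) t) :
    |∑ i ∈ (lev ν x) \ (lev ν a), f i * Real.log (ν i) * g (ν i) - (G x - G a)| ≤
      2 * C * (|g x| + σ * (g x - g a)) := by
  set S : ℝ → ℝ := fun t => ∑ i ∈ lev ν t, f i * Real.log (ν i) with hS
  set s := (lev ν x) \ (lev ν a) with hs
  have hpos : ∀ t ∈ Set.Icc a x, (0:ℝ) < t := fun t ht => by linarith [ht.1]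
  obtain ⟨h1, h2⟩ := abel_fin s ν (fun i => f i * Real.log (ν i)) g g' a x hax (by
    intro i hi
    rw [hs, Finset.mem_sdiff, mem_lev W.fin, mem_lev W.fin] at hi
    exact ⟨by linarith [hi.2], hi.1⟩) hg hg'
  have hW : ∀ t ∈ Set.Icc a x, ∑ i ∈ s with ν i ≤ t, f i * Real.log (ν i) = S t - S a := by
    intro t ht
    rw [hS, ← Finset.sum_sdiff_eq_sub (lev_mono W.fin ht.1)]
    apply Finset.sum_congr _ (fun _ _ => rfl)
    ext i
    simp only [hs, Finset.mem_filter, Finset.mem_sdiff, mem_lev W.fin]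
    constructor
    · rintro ⟨⟨h1, h2⟩, h3⟩; exact ⟨h3, h2⟩
    · rintro ⟨h1, h2⟩; exact ⟨⟨h1.trans ht.2, h2⟩, h1⟩
  have hD : ∀ t ∈ Set.Icc a x, |(S t - S a) - (Real.log t - Real.log a)| ≤ 2 * C := by
    intro t ht
    have e1 := abs_le.1 (W.bd t (by linarith [ht.1]))
    have e2 := abs_le.1 (W.bd a ha)
    rw [abs_le]; constructor <;> simp only [hS] <;> linarith
  have hv : ContinuousOn (fun t => g' t * (Real.log t - Real.log a)) (Set.Icc a x) := by
    apply hg'.mul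
    apply ContinuousOn.sub _ continuousOn_const
    intro t ht
    exact (Real.continuousAt_log (hpos t ht).ne').continuousWithinAt
  have hvi : IntervalIntegrable (fun t => g' t * (Real.log t - Real.log a)) MeasureTheory.volume a x := by
    apply ContinuousOn.intervalIntegrable; rwa [Set.uIcc_of_le hax]
  have hF : ∫ t in a..x, g' t * (Real.log t - Real.log a) =
      g x * (Real.log x - Real.log a) - (G x - G a) := by
    rw [intervalIntegral.integral_eq_sub_of_hasDerivAt
      (f := fun t => g t * (Real.log t - Real.log a) - G t) _ hvi]
    · ring
    · intro t ht
      rw [Set.uIcc_of_le hax] at ht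
      have := ((hg t ht).fun_mul ((Real.hasDerivAt_log (hpos t ht).ne').sub_const (Real.log a))).fun_sub (hG t ht)
      refine this.congr_deriv ?_
      ring
  have hgi : IntervalIntegrable g' MeasureTheory.volume a x := by
    apply ContinuousOn.intervalIntegrable; rwa [Set.uIcc_of_le hax]
  have hGI : ∫ t in a..x, 2 * C * |g' t| = 2 * C * (σ * (g x - g a)) := by
    rw [intervalIntegral.integral_const_mul]
    congr 1
    rw [intervalIntegral.integral_congr (g := fun t => σ * g' t), intervalIntegral.integral_const_mul,
      intervalIntegral.integral_eq_sub_of_hasDerivAt _ hgi]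
    · intro t ht; rw [Set.uIcc_of_le hax] at ht; exact hg t ht
    · intro t ht; rw [Set.uIcc_of_le hax] at ht; exact hσ t ht
  have hsx : ∑ i ∈ s, f i * Real.log (ν i) = S x - S a := by
    rw [← hW x ⟨hax, le_rfl⟩]
    apply Finset.sum_congr _ (fun _ _ => rfl)
    rw [Finset.filter_true_of_mem]
    intro i hi
    rw [hs, Finset.mem_sdiff, mem_lev W.fin] at hi
    exact hi.1
  have hB : |∫ t in a..x, (g' t * ∑ i ∈ s with ν i ≤ t, f i * Real.log (ν i)) -
      g' t * (Real.log t - Real.log a)| ≤ 2 * C * (σ * (g x - g a)) := by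
    rw [← hGI, ← Real.norm_eq_abs]
    apply intervalIntegral.norm_integral_le_of_norm_le hax
    · filter_upwards with t ht
      have ht' : t ∈ Set.Icc a x := ⟨ht.1.le, ht.2⟩
      rw [hW t ht', Real.norm_eq_abs, ← mul_sub, abs_mul, mul_comm]
      exact mul_le_mul_of_nonneg_right (hD t ht') (abs_nonneg _)
    · exact (hgi.abs).const_mul _
  rw [intervalIntegral.integral_sub h1 hvi, hF] at hB
  rw [h2, hsx]
  have h3 : |g x * (S x - S a) - g x * (Real.log x - Real.log a)| ≤ 2 * C * |g x| := by
    rw [← mul_sub, abs_mul, mul_comm]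
    exact mul_le_mul_of_nonneg_right (hD x ⟨hax, le_rfl⟩) (abs_nonneg _)
  rw [abs_le] at h3 hB ⊢
  constructor <;> linarith [h3.1, h3.2, hB.1, hB.2]

/-- partial sums -/
def Fs (ν f : ι → ℝ) (t : ℝ) : ℝ := ∑ i ∈ lev ν t, f i

lemma Wt.log_pos (W : Wt ν f C) (i : ι) : 0 < Real.log (ν i) :=
  Real.log_pos (by linarith [W.two i])

lemma mertens2 (W : Wt ν f C) (D : ℝ)
    (hD : Tendsto (fun t => Fs ν f t - Real.log (Real.log t)) atTop (𝓝 D)) (t : ℝ) (ht : 2 ≤ t) :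
    |Fs ν f t - Real.log (Real.log t) - D| ≤ 2 * C / Real.log t := by
  have hlt : 0 < Real.log t := Real.log_pos (by linarith)
  have key : ∀ x, t ≤ x → |(Fs ν f x - Real.log (Real.log x)) - (Fs ν f t - Real.log (Real.log t))|
      ≤ 2 * C / Real.log t := by
    intro x hx
    have hlp : ∀ u ∈ Set.Icc t x, 0 < u ∧ 0 < Real.log u := fun u hu =>
      ⟨by linarith [hu.1], Real.log_pos (by linarith [hu.1])⟩
    have := abel_compare W (fun u => (Real.log u)⁻¹) (fun u => -(u⁻¹) / (Real.log u)^2)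
      (fun u => Real.log (Real.log u)) (-1) t x (by linarith) hx
      (fun u hu => (Real.hasDerivAt_log (hlp u hu).1.ne').inv (hlp u hu).2.ne')
      (by
        intro u hu
        have h1 := (hlp u hu).1.ne'
        have h2 := (hlp u hu).2.ne'
        apply ContinuousAt.continuousWithinAt
        apply ContinuousAt.div
        · exact (continuousAt_inv₀ h1).neg
        · exact (Real.continuousAt_log h1).pow 2
        · positivity)
      (by
        intro u hu
        have h1 := (hlp u hu).1
        have h2 := (hlp u hu).2
        rw [abs_of_nonpos, neg_one_mul]
        rw [neg_div, neg_nonpos]; positivity)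
      (by
        intro u hu
        have := (Real.hasDerivAt_log (hlp u hu).1.ne').log (hlp u hu).2.ne'
        convert this using 1
        field_simp)
    have e : ∑ i ∈ (lev ν x) \ (lev ν t), f i * Real.log (ν i) * (Real.log (ν i))⁻¹ =
        Fs ν f x - Fs ν f t := by
      unfold Fs
      rw [← Finset.sum_sdiff_eq_sub (lev_mono W.fin hx)]
      apply Finset.sum_congr rfl
      intro i _
      field_simp [(W.log_pos i).ne']
    rw [e] at this
    have hx' := (hlp x ⟨hx, le_rfl⟩).2
    rw [abs_of_pos (inv_pos.2 hx')] at this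
    calc _ = _ := by congr 1; ring
      _ ≤ _ := this
      _ = _ := by ring
  have hlim : Tendsto (fun x => |(Fs ν f x - Real.log (Real.log x)) -
      (Fs ν f t - Real.log (Real.log t))|) atTop (𝓝 |D - (Fs ν f t - Real.log (Real.log t))|) :=
    (hD.sub_const _).abs
  have := le_of_tendsto hlim (eventually_atTop.2 ⟨t, key⟩)
  rwa [abs_sub_comm]

lemma lev_one (W : Wt ν f C) : lev ν 1 = ∅ := by
  ext i
  rw [mem_lev W.fin]
  simp only [Finset.notMem_empty, iff_false, not_le]
  linarith [W.two i]

lemma moments (W : Wt ν f C) (k : ℕ) (T : ℝ) (hT : 1 ≤ T) :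
    |∑ i ∈ lev ν T, f i * Real.log (ν i) ^ (k+1) - (Real.log T)^(k+1)/(k+1)| ≤
      4 * C * (Real.log T)^k := by
  have hlp : ∀ u ∈ Set.Icc 1 T, 0 < u ∧ 0 ≤ Real.log u := fun u hu =>
      ⟨by linarith [hu.1], Real.log_nonneg (by linarith [hu.1])⟩
  have := abel_compare W (fun u => (Real.log u)^k) (fun u => k * (Real.log u)^(k-1) * u⁻¹)
      (fun u => (Real.log u)^(k+1)/(k+1)) 1 1 T le_rfl hT
      (fun u hu => (Real.hasDerivAt_log (hlp u hu).1.ne').fun_pow k)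
      (by
        intro u hu
        have h1 := (hlp u hu).1.ne'
        apply ContinuousAt.continuousWithinAt
        exact (continuousAt_const.mul ((Real.continuousAt_log h1).pow _)).mul (continuousAt_inv₀ h1))
      (by
        intro u hu
        have h1 := (hlp u hu).1
        have h2 := (hlp u hu).2
        rw [abs_of_nonneg, one_mul]
        positivity)
      (by
        intro u hu
        have := ((Real.hasDerivAt_log (hlp u hu).1.ne').fun_pow (k+1)).div_const ((k:ℝ)+1)
        refine this.congr_deriv ?_
        have : (k:ℝ) + 1 ≠ 0 := by positivity
        push_cast
        field_simp)
  rw [lev_one W, Finset.sdiff_empty] at this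
  have hl := (hlp T ⟨hT, le_rfl⟩).2
  have hk := pow_nonneg hl k
  have hC := W.hC
  have e : ∑ i ∈ lev ν T, f i * Real.log (ν i) * (Real.log (ν i))^k =
    ∑ i ∈ lev ν T, f i * Real.log (ν i) ^ (k+1) := by
    apply Finset.sum_congr rfl; intro i _; ring
  rw [e] at this
  simp only [Real.log_one, ne_eq, Nat.add_eq_zero_iff, one_ne_zero, and_false, not_false_eq_true,
    zero_pow, zero_div, sub_zero, abs_of_nonneg hk, one_mul] at this
  refine this.trans ?_
  have : (0:ℝ) ≤ 0 ^ k := by positivity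
  nlinarith [mul_nonneg hC this, mul_nonneg hC hk]
end

/-- dilogarithm -/
def Li (x : ℝ) : ℝ := ∑' k : ℕ, x ^ (k+1) / ((k:ℝ)+1)^2

lemma sum_inv_sq : Summable (fun k : ℕ => 1 / ((k:ℝ)+1)^2) := by
  have := (summable_nat_add_iff 1).2 hasSum_zeta_two.summable
  simpa using this

lemma Li_one : Li 1 = Real.pi^2/6 := by
  unfold Li
  have := hasSum_zeta_two.summable.tsum_eq_zero_add
  rw [hasSum_zeta_two.tsum_eq] at this
  rw [this]
  simp

lemma Li_cont : ContinuousOn Li (Set.Icc 0 1) := by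
  unfold Li
  apply continuousOn_tsum (u := fun k : ℕ => 1 / ((k:ℝ)+1)^2)
  · intro i; fun_prop
  · exact sum_inv_sq
  · intro n x hx
    rw [Real.norm_eq_abs, abs_of_nonneg (by have := hx.1; positivity)]
    gcongr
    exact pow_le_one₀ hx.1 hx.2

lemma Li_deriv (x : ℝ) (h0 : 0 < x) (h1 : x < 1) : HasDerivAt Li (-Real.log (1-x)/x) x := by
  obtain ⟨r, hr, hr1⟩ := exists_between h1
  have h := hasDerivAt_tsum_of_isPreconnected (u := fun k : ℕ => r ^ k) (t := Set.Ioo (-r) r)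
    (g := fun (k:ℕ) (y:ℝ) => y^(k+1) / ((k:ℝ)+1)^2) (g' := fun (k:ℕ) (y:ℝ) => y^k/((k:ℝ)+1))
    (y₀ := 0) (y := x)
    (summable_geometric_of_lt_one (by linarith) hr1) isOpen_Ioo isPreconnected_Ioo
    (by
      intro n y hy
      have := (hasDerivAt_pow (n+1) y).div_const (((n:ℝ)+1)^2)
      refine this.congr_deriv ?_
      have : (n:ℝ) + 1 ≠ 0 := by positivity
      push_cast
      field_simp)
    (by
      intro n y hy
      rw [Real.norm_eq_abs, abs_div, abs_pow, abs_of_pos (by positivity : (0:ℝ) < (n:ℝ)+1)]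
      have : |y| ≤ r := abs_le.2 ⟨hy.1.le, hy.2.le⟩
      calc _ ≤ |y|^n := div_le_self (by positivity) (by linarith [Nat.cast_nonneg (α := ℝ) n])
        _ ≤ _ := by gcongr)
    (by constructor <;> linarith) (by simp) ⟨by linarith, hr⟩
  refine h.congr_deriv ?_
  have := (Real.hasSum_pow_div_log_of_abs_lt_one (x := x) (by rw [abs_of_pos h0]; exact h1)).div_const x
  rw [← this.tsum_eq]
  apply tsum_congr
  intro k
  have : (k:ℝ) + 1 ≠ 0 := by positivity
  field_simp
  ring

lemma log_log_lim : Tendsto (fun x : ℝ => Real.log x * Real.log (1 - x)) (𝓝[>] 0) (𝓝 0) := by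
  have h := tendsto_log_mul_rpow_nhdsGT_zero zero_lt_one
  simp only [Real.rpow_one] at h
  have h2 : Tendsto (fun x : ℝ => -2 * (Real.log x * x)) (𝓝[>] 0) (𝓝 0) := by
    simpa using h.const_mul (-2)
  refine squeeze_zero' (t₀ := 𝓝[>] 0) ?_ ?_ h2
  · filter_upwards [Ioo_mem_nhdsGT (show (0:ℝ) < 1/2 by norm_num)] with x hx
    exact mul_nonneg_of_nonpos_of_nonpos (Real.log_nonpos hx.1.le (by linarith [hx.2]))
      (Real.log_nonpos (by linarith [hx.2]) (by linarith [hx.1]))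
  · filter_upwards [Ioo_mem_nhdsGT (show (0:ℝ) < 1/2 by norm_num)] with x hx
    have e1 := Real.log_nonpos hx.1.le (by linarith [hx.2])
    have e2 : -2 * x ≤ Real.log (1 - x) := by
      have hp : 0 < 1 - x := by linarith [hx.2]
      have := Real.one_sub_inv_le_log_of_pos hp
      refine le_trans ?_ this
      have : (1-x)⁻¹ ≤ 1 + 2 * x := by
        rw [inv_le_iff_one_le_mul₀ hp]; nlinarith [hx.1, hx.2]
      linarith
    nlinarith

lemma Li_half : Li (1/2) = Real.pi^2/12 - Real.log 2 ^2/2 := by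
  set g : ℝ → ℝ := fun x => Li x + Li (1-x) + Real.log x * Real.log (1-x) with hg
  have hd : ∀ x ∈ Set.Ioo (0:ℝ) 1, HasDerivAt g 0 x := by
    intro x hx
    have hx0 := hx.1
    have hx1 : 0 < 1 - x := by linarith [hx.2]
    have e0 : HasDerivAt (fun x : ℝ => 1 - x) (-1) x := by
      simpa using (hasDerivAt_id x).const_sub 1
    have e1 := Li_deriv x hx.1 hx.2
    have e2 := (Li_deriv (1-x) hx1 (by linarith)).comp x e0
    have e3 := (Real.hasDerivAt_log hx0.ne').fun_mul ((Real.hasDerivAt_log hx1.ne').comp x e0)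
    have := (e1.fun_add e2).fun_add e3
    refine this.congr_deriv ?_
    have := hx0.ne'
    have := hx1.ne'
    simp only [Function.comp_def, sub_sub_cancel]
    field_simp
    ring
  have hc : ∀ x ∈ Set.Ioo (0:ℝ) 1, g x = g (1/2) := by
    intro x hx
    exact isOpen_Ioo.is_const_of_deriv_eq_zero isPreconnected_Ioo
      (fun y hy => (hd y hy).differentiableAt.differentiableWithinAt) (fun y hy => (hd y hy).deriv)
      hx ⟨by norm_num, by norm_num⟩
  have hl : Tendsto g (𝓝[>] 0) (𝓝 (Li 0 + Li 1 + 0)) := by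
    have hm : Set.Icc (0:ℝ) 1 ∈ 𝓝[>] (0:ℝ) := Icc_mem_nhdsGT (by norm_num)
    apply Tendsto.add _ log_log_lim
    apply Tendsto.add
    · refine ((Li_cont 0 ⟨le_rfl, by norm_num⟩).tendsto).mono_left ?_
      exact nhdsWithin_le_iff.2 hm
    · refine ((Li_cont 1 ⟨by norm_num, le_rfl⟩).tendsto).comp ?_
      rw [tendsto_nhdsWithin_iff]
      constructor
      · have : Tendsto (fun x : ℝ => 1 - x) (𝓝 0) (𝓝 (1 - 0)) := by
          apply Continuous.tendsto; fun_prop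
        rw [sub_zero] at this
        exact this.mono_left nhdsWithin_le_nhds
      · filter_upwards [hm] with x hx
        exact ⟨by linarith [hx.2], by linarith [hx.1]⟩
  have hl2 : Tendsto g (𝓝[>] 0) (𝓝 (g (1/2))) := by
    apply tendsto_const_nhds.congr'
    filter_upwards [Ioo_mem_nhdsGT (show (0:ℝ) < 1 by norm_num)] with x hx
    exact (hc x hx).symm
  have := tendsto_nhds_unique hl hl2
  have h0 : Li 0 = 0 := by simp [Li]
  rw [h0, Li_one] at this
  simp only [hg] at this
  rw [show (1:ℝ) - 1/2 = 1/2 by norm_num, show Real.log (1/2) = - Real.log 2 by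
    rw [one_div, Real.log_inv]] at this
  linarith

section
variable {ι : Type*} {ν f : ι → ℝ} {C : ℝ}

/-- pair sum -/
def PS (ν f : ι → ℝ) (y : ℝ) : ℝ :=
  ∑ i ∈ lev ν y, ∑ j ∈ lev ν y, if ν i * ν j ≤ y then f i * f j else 0

lemma PS_half (fin : ∀ x, {i | ν i ≤ x}.Finite) (two : ∀ i, 2 ≤ ν i) (s : ℝ) (hs : 1 ≤ s) :
    ∑ i ∈ lev ν (s*s), ∑ j ∈ lev ν (s*s),
      (if ν i * ν j ≤ s * s ∧ ν i ≤ s then f i * f j else 0) =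
    ∑ i ∈ lev ν s, f i * Fs ν f (s*s / ν i) := by
  have hss : s ≤ s * s := by nlinarith
  have hsub := lev_mono (ν := ν) fin hss
  rw [← Finset.sum_subset hsub]
  · apply Finset.sum_congr rfl
    intro i hi
    rw [mem_lev fin] at hi
    have hp : 0 < ν i := by linarith [two i]
    rw [Fs, Finset.mul_sum]
    rw [← Finset.sum_subset (s₁ := lev ν (s*s / ν i))]
    · apply Finset.sum_congr rfl
      intro j hj
      rw [mem_lev fin, le_div_iff₀ hp] at hj
      rw [if_pos ⟨by linarith, hi⟩]
    · apply lev_mono fin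
      apply div_le_self (by positivity) (by linarith [two i])
    · intro j _ hj
      rw [mem_lev fin, le_div_iff₀ hp] at hj
      rw [if_neg]
      rintro ⟨h1, _⟩; exact hj (by linarith)
  · intro i _ hi
    rw [mem_lev fin] at hi
    apply Finset.sum_eq_zero
    intro j _
    rw [if_neg (fun h => hi h.2)]

lemma PS_hyp (fin : ∀ x, {i | ν i ≤ x}.Finite) (two : ∀ i, 2 ≤ ν i) (s : ℝ) (hs : 1 ≤ s) :
    PS ν f (s*s) = 2 * ∑ i ∈ lev ν s, f i * Fs ν f (s*s / ν i) - Fs ν f s ^ 2 := by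
  have hss : s ≤ s * s := by nlinarith
  have h1 := PS_half (f := f) fin two s hs
  have h2 : ∑ i ∈ lev ν (s*s), ∑ j ∈ lev ν (s*s),
      (if ν i * ν j ≤ s * s ∧ ν j ≤ s then f i * f j else 0) =
    ∑ i ∈ lev ν s, f i * Fs ν f (s*s / ν i) := by
    rw [← h1, Finset.sum_comm]
    apply Finset.sum_congr rfl; intro i _
    apply Finset.sum_congr rfl; intro j _
    rw [mul_comm (ν j), mul_comm (f j)]
  have h3 : ∑ i ∈ lev ν (s*s), ∑ j ∈ lev ν (s*s),
      (if ν i ≤ s ∧ ν j ≤ s then f i * f j else 0) = Fs ν f s ^ 2 := by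
    have e : (lev ν (s*s)).filter (fun i => ν i ≤ s) = lev ν s := by
      ext i
      simp only [Finset.mem_filter, mem_lev fin]
      exact ⟨fun h => h.2, fun h => ⟨h.trans hss, h⟩⟩
    rw [sq, Fs, Finset.sum_mul_sum, ← e, Finset.sum_filter]
    apply Finset.sum_congr rfl; intro i _
    by_cases hi : ν i ≤ s
    · simp only [hi, true_and, if_true, Finset.sum_filter]
    · simp [hi]
  rw [two_mul]
  nth_rw 1 [← h1]
  rw [← h2, ← h3, PS, ← Finset.sum_add_distrib, ← Finset.sum_sub_distrib]
  apply Finset.sum_congr rfl; intro i _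
  rw [← Finset.sum_add_distrib, ← Finset.sum_sub_distrib]
  apply Finset.sum_congr rfl; intro j _
  have hi := two i
  have hj := two j
  by_cases a : ν i ≤ s <;> by_cases b : ν j ≤ s
  · have : ν i * ν j ≤ s * s := mul_le_mul a b (by linarith) (by linarith)
    simp [a, b, this]
  · simp [a, b]
  · simp [a, b]
  · have : ¬ ν i * ν j ≤ s * s := by
      push Not at a b ⊢
      exact mul_lt_mul'' a b (by linarith) (by linarith)
    simp [a, b, this]

lemma log_sum (W : Wt ν f C) (L s : ℝ) (hL : 0 < L) (hs : 1 ≤ s) (hsL : Real.log s = L / 2) :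
    |∑ i ∈ lev ν s, f i * Real.log (1 - Real.log (ν i) / L) + Li (1/2)| ≤ 8 * C / L := by
  have hu : ∀ i ∈ lev ν s, |Real.log (ν i) / L| < 1 := by
    intro i hi
    rw [mem_lev W.fin] at hi
    have h1 := W.log_pos i
    have h2 : Real.log (ν i) ≤ L / 2 := by
      rw [← hsL]; exact Real.log_le_log (by linarith [W.two i]) hi
    rw [abs_of_pos (by positivity), div_lt_one hL]; linarith
  have H1 : HasSum (fun k : ℕ => ∑ i ∈ lev ν s, f i * ((Real.log (ν i) / L)^(k+1)/((k:ℝ)+1)))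
      (∑ i ∈ lev ν s, f i * (-Real.log (1 - Real.log (ν i) / L))) :=
    hasSum_sum (fun i hi => (Real.hasSum_pow_div_log_of_abs_lt_one (hu i hi)).mul_left (f i))
  have H2 : HasSum (fun k : ℕ => (1/2:ℝ)^(k+1) / ((k:ℝ)+1)^2) (Li (1/2)) := by
    apply Summable.hasSum
    refine Summable.of_nonneg_of_le (fun k => by positivity) (fun k => ?_) sum_inv_sq
    gcongr
    exact pow_le_one₀ (by norm_num) (by norm_num)
  have H3 := H1.sub H2
  have H4 : HasSum (fun k : ℕ => 4 * C / L * (1/2:ℝ)^k) (4 * C / L * 2) := by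
    have := hasSum_geometric_of_lt_one (r := (1/2:ℝ)) (by norm_num) (by norm_num)
    norm_num at this
    exact (by simpa using this : HasSum (fun k : ℕ => (1/2:ℝ)^k) 2).mul_left _
  have hb := H3.norm_le_of_bounded H4 (by
    intro k
    have hm := moments W k s hs
    rw [hsL] at hm
    have e : ∑ i ∈ lev ν s, f i * ((Real.log (ν i) / L)^(k+1)/((k:ℝ)+1)) - (1/2:ℝ)^(k+1) / ((k:ℝ)+1)^2
      = (∑ i ∈ lev ν s, f i * Real.log (ν i) ^ (k+1) - (L/2)^(k+1)/(k+1)) / (L^(k+1) * (k+1)) := by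
      rw [sub_div, Finset.sum_div]
      congr 1
      · apply Finset.sum_congr rfl; intro i _; rw [div_pow]; field_simp
      · rw [div_pow, div_pow, one_pow]; field_simp
    rw [e, Real.norm_eq_abs, abs_div, abs_of_pos (a := L^(k+1) * ((k:ℝ)+1)) (by positivity)]
    have hC := W.hC
    calc _ ≤ (4 * C * (L/2)^k) / (L^(k+1) * ((k:ℝ)+1)) := by gcongr
      _ ≤ (4 * C * (L/2)^k) / (L^(k+1) * 1) := by
          gcongr; linarith [Nat.cast_nonneg (α := ℝ) k]
      _ = _ := by rw [div_pow, div_pow, pow_succ, one_pow]; field_simp)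
  rw [Real.norm_eq_abs, abs_sub_comm] at hb
  calc _ = |Li (1/2) - ∑ i ∈ lev ν s, f i * (-Real.log (1 - Real.log (ν i) / L))| := by
        congr 1; simp only [mul_neg, Finset.sum_neg_distrib]; ring
    _ ≤ _ := hb
    _ = _ := by ring

lemma PS_main (W : Wt ν f C) (D : ℝ)
    (hD : Tendsto (fun t => Fs ν f t - Real.log (Real.log t)) atTop (𝓝 D)) :
    ∃ C', 0 ≤ C' ∧ ∀ y, 1 ≤ y → 1 ≤ Real.log (Real.log y) →
      |PS ν f y - ((Real.log (Real.log y) + D)^2 - Real.pi^2/6)| ≤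
        C' * (Real.log (Real.log y) / Real.log y) := by
  have hC := W.hC
  refine ⟨8*C+16*C^2+8*C*(1+|D|+4*C)+16*C, by positivity, ?_⟩
  intro y hy hLL
  set L := Real.log y with hLdef
  have hL0 : 0 ≤ L := Real.log_nonneg hy
  have hL2 : 2 ≤ L := by
    by_contra hcon
    push Not at hcon
    rcases hL0.eq_or_lt with h0 | h0
    · rw [← h0] at hLL; simp at hLL; linarith
    · have := Real.log_le_sub_one_of_pos h0; linarith
  have hL : 0 < L := by linarith
  have hy0 : 0 < y := by linarith
  set s := Real.sqrt y with hs
  have hss : s * s = y := Real.mul_self_sqrt hy0.le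
  have hs1 : 1 ≤ s := by rw [hs, Real.one_le_sqrt]; exact hy
  have hsL : Real.log s = L / 2 := Real.log_sqrt hy0.le
  have hs2 : 2 ≤ s := by
    have h1 : Real.log 2 ≤ Real.log s := by
      rw [hsL]; have := Real.log_two_lt_d9; linarith
    exact (Real.log_le_log_iff (by norm_num) (by linarith)).1 h1
  set X := Real.log L + D with hX
  set a := Fs ν f s with ha
  have ha0 : 0 ≤ a := Finset.sum_nonneg (fun i _ => W.nn i)
  have h1 : |a - (X - Real.log 2)| ≤ 4 * C / L := by
    have := mertens2 W D hD s hs2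
    rw [hsL, Real.log_div hL.ne' (by norm_num)] at this
    calc _ = _ := by congr 1; rw [hX, ha]; ring
      _ ≤ _ := this
      _ = _ := by field_simp; ring
  have h2 : |∑ i ∈ lev ν s, f i * Fs ν f (s*s / ν i) - (X * a +
      ∑ i ∈ lev ν s, f i * Real.log (1 - Real.log (ν i) / L))| ≤ 4 * C / L * a := by
    rw [ha, Fs, Finset.mul_sum, Finset.mul_sum, ← Finset.sum_add_distrib, ← Finset.sum_sub_distrib]
    refine (Finset.abs_sum_le_sum_abs _ _).trans (Finset.sum_le_sum ?_)
    intro i hi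
    rw [mem_lev W.fin] at hi
    have hp : 0 < ν i := by linarith [W.two i]
    have ht : s ≤ s * s / ν i := by rw [le_div_iff₀ hp]; exact mul_le_mul_of_nonneg_left hi (by linarith)
    have hlt : Real.log (s * s / ν i) = L * (1 - Real.log (ν i) / L) := by
      rw [hss, Real.log_div hy0.ne' hp.ne']; field_simp; rfl
    have hl2 : L / 2 ≤ Real.log (s * s / ν i) := by
      rw [← hsL]; exact Real.log_le_log (by linarith) ht
    have hu : 0 < 1 - Real.log (ν i) / L := by
      rw [hlt] at hl2
      by_contra hcon
      push Not at hcon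
      nlinarith
    have hm := mertens2 W D hD (s * s / ν i) (by linarith)
    have hb : 2 * C / Real.log (s * s / ν i) ≤ 4 * C / L := by
      calc _ ≤ 2 * C / (L / 2) := by gcongr
        _ = _ := by field_simp; ring
    have hm2 := hm.trans hb
    rw [hlt, Real.log_mul hL.ne' hu.ne'] at hm2
    rw [show f i * Fs ν f (s * s / ν i) - (X * f i + f i * Real.log (1 - Real.log (ν i) / L)) =
      f i * (Fs ν f (s * s / ν i) - (Real.log L + Real.log (1 - Real.log (ν i) / L)) - D) by
        rw [hX]; ring, abs_mul, abs_of_nonneg (W.nn i), mul_comm]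
    exact mul_le_mul_of_nonneg_right hm2 (W.nn i)
  have h3 := log_sum W L s hL hs1 hsL
  rw [Li_half] at h3
  rw [← hss, PS_hyp W.fin W.two s hs1]
  set S := ∑ i ∈ lev ν s, f i * Fs ν f (s*s / ν i)
  set Q := ∑ i ∈ lev ν s, f i * Real.log (1 - Real.log (ν i) / L)
  set e := a - (X - Real.log 2) with he
  have hl20 : 0 < Real.log 2 := Real.log_pos (by norm_num)
  have hl21 : Real.log 2 ≤ 1 := by linarith [Real.log_two_lt_d9]
  have hid : 2 * S - a^2 - (X^2 - Real.pi^2/6) = 2 * (S - (X * a + Q)) +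
      2 * (Q + (Real.pi^2/12 - Real.log 2^2/2)) + (2 * Real.log 2 * e - e^2) := by
    have : X = a - e + Real.log 2 := by rw [he]; ring
    rw [this]; ring
  rw [hid]
  have he1 : |2 * Real.log 2 * e - e^2| ≤ (8 * C + 16 * C^2) / L := by
    have e1 : |e|^2 ≤ 16 * C^2 / L := by
      calc |e|^2 ≤ (4 * C / L)^2 := by gcongr
        _ = 16 * C^2 / L / L := by ring
        _ ≤ _ := div_le_self (by positivity) (by linarith)
    calc _ ≤ |2 * Real.log 2 * e| + |e^2| := abs_sub _ _
      _ = 2 * Real.log 2 * |e| + |e|^2 := by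
          rw [abs_mul, abs_of_pos (by positivity : (0:ℝ) < 2 * Real.log 2), abs_pow]
      _ ≤ 2 * 1 * (4 * C / L) + 16 * C^2 / L := by gcongr
      _ = _ := by ring
  have ha1 : a ≤ (1 + |D| + 4 * C) * Real.log L := by
    have := (abs_le.1 h1).2
    have h5 : 4 * C / L ≤ 4 * C := div_le_self (by positivity) (by linarith)
    have h6 := le_abs_self D
    nlinarith [abs_nonneg D]
  have h7 : 4 * C / L * a ≤ 4 * C / L * ((1 + |D| + 4 * C) * Real.log L) := by gcongr
  calc _ ≤ |2 * (S - (X * a + Q))| + |2 * (Q + (Real.pi^2/12 - Real.log 2^2/2))| +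
          |2 * Real.log 2 * e - e^2| := abs_add_three _ _ _
    _ ≤ 2 * (4 * C / L * ((1 + |D| + 4 * C) * Real.log L)) + 2 * (8 * C / L) + (8 * C + 16 * C^2) / L := by
        rw [abs_mul, abs_mul, abs_two]
        gcongr
        exact h2.trans h7
    _ = (8 * C * (1+|D|+4*C) * Real.log L + (16 * C + 8 * C + 16 * C^2) * 1) / L := by ring
    _ ≤ (8 * C * (1+|D|+4*C) * Real.log L + (16 * C + 8 * C + 16 * C^2) * Real.log L) / L := by gcongr
    _ = _ := by ring
end

section
lemma LL_two {y : ℝ} (hy : 1 ≤ y) (hLL : 1 ≤ Real.log (Real.log y)) : 2 ≤ Real.log y := by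
  have hL0 : 0 ≤ Real.log y := Real.log_nonneg hy
  by_contra hcon
  push Not at hcon
  rcases hL0.eq_or_lt with h0 | h0
  · rw [← h0] at hLL; simp at hLL; linarith
  · have := Real.log_le_sub_one_of_pos h0; linarith

lemma PS_err {P : Type*} {N : P → ℕ} {κ τ K C : ℝ} (H : Sys N κ τ K)
    (W : Wt (pn N) (fun p => (pn N p)⁻¹) C) (D : ℝ)
    (hD : Tendsto (fun t => Fs (pn N) (fun p => (pn N p)⁻¹) t - Real.log (Real.log t)) atTop (𝓝 D)) :
    ∃ C', 0 ≤ C' ∧ ∀ y, 1 ≤ y → 1 ≤ Real.log (Real.log y) →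
      PS (pn N) (fun p => pn N p ^ (-τ)) y ≤
        C' * (y ^ (1 - τ) * (Real.log (Real.log y) / Real.log y)) := by
  have hC := W.hC
  obtain ⟨C1, hC1, hneg⟩ := prime_neg_sum H τ H.hτ0 H.hτ1
  refine ⟨4 * C1 * (1 + |D| + 4 * C), by positivity, ?_⟩
  intro y hy hLL
  have hL2 := LL_two hy hLL
  set L := Real.log y with hLdef
  have hL : 0 < L := by linarith
  have hy0 : 0 < y := by linarith
  set s := Real.sqrt y with hs
  have hss : s * s = y := Real.mul_self_sqrt hy0.le
  have hs1 : 1 ≤ s := by rw [hs, Real.one_le_sqrt]; exact hy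
  have hsL : Real.log s = L / 2 := Real.log_sqrt hy0.le
  have hs2 : 2 ≤ s := by
    have h1 : Real.log 2 ≤ Real.log s := by
      rw [hsL]; have := Real.log_two_lt_d9; linarith
    exact (Real.log_le_log_iff (by norm_num) (by linarith)).1 h1
  set a := Fs (pn N) (fun p => (pn N p)⁻¹) s with ha
  have ha1 : a ≤ (1 + |D| + 4 * C) * Real.log L := by
    have h1 := mertens2 W D hD s hs2
    rw [hsL, Real.log_div hL.ne' (by norm_num)] at h1
    have := (abs_le.1 h1).2
    have h5 : 2 * C / (L / 2) ≤ 4 * C := by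
      rw [show 2 * C / (L / 2) = 4 * C / L by field_simp; ring]
      exact div_le_self (by positivity) (by linarith)
    have h6 := le_abs_self D
    have hl20 : 0 < Real.log 2 := Real.log_pos (by norm_num)
    nlinarith [abs_nonneg D]
  have h2 : ∑ p ∈ lev (pn N) s, pn N p ^ (-τ) * Fs (pn N) (fun p => pn N p ^ (-τ)) (s * s / pn N p)
      ≤ (2 * C1 / L * y ^ (1 - τ)) * a := by
    rw [ha, Fs, Finset.mul_sum]
    apply Finset.sum_le_sum
    intro i hi
    rw [mem_lev W.fin] at hi
    have hp : 0 < pn N i := by linarith [W.two i]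
    have ht : s ≤ s * s / pn N i := by
      rw [le_div_iff₀ hp]; exact mul_le_mul_of_nonneg_left hi (by linarith)
    have hl2 : L / 2 ≤ Real.log (s * s / pn N i) := by
      rw [← hsL]; exact Real.log_le_log (by linarith) ht
    have hz := hneg (s * s / pn N i) (by linarith)
    have hτ1 := H.hτ1
    calc _ ≤ pn N i ^ (-τ) * (C1 * ((s * s / pn N i) ^ (1 - τ) / Real.log (s * s / pn N i))) := by
          gcongr; exact hz
      _ ≤ pn N i ^ (-τ) * (C1 * ((s * s / pn N i) ^ (1 - τ) / (L / 2))) := by gcongr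
      _ = (2 * C1 / L * y ^ (1 - τ)) * (pn N i ^ (-τ) * (pn N i ^ (1 - τ))⁻¹) := by
          rw [hss, Real.div_rpow hy0.le hp.le]; field_simp
      _ = _ := by
          rw [← Real.rpow_neg hp.le, ← Real.rpow_add hp, show -τ + -(1 - τ) = -1 by ring,
            Real.rpow_neg_one]
  rw [← hss, PS_hyp W.fin W.two s hs1, hss]
  rw [hss] at h2
  have h3 : (2 * C1 / L * y ^ (1 - τ)) * a ≤ (2 * C1 / L * y ^ (1 - τ)) * ((1 + |D| + 4 * C) * Real.log L) := by
    gcongr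
  have h4 := sq_nonneg (Fs (pn N) (fun p => pn N p ^ (-τ)) s)
  have h5 : 4 * C1 * (1 + |D| + 4 * C) * (y ^ (1 - τ) * (Real.log L / L)) =
    2 * ((2 * C1 / L * y ^ (1 - τ)) * ((1 + |D| + 4 * C) * Real.log L)) := by ring
  rw [h5]
  linarith
end

section
variable {P : Type*}

lemma euler_fin (A : P → Finset ℕ) (g : P → ℕ → ℝ) (hg0 : ∀ p, g p 0 = 1) (S : Finset P) :
    ∑ b ∈ S.finsupp A, b.prod g = ∏ p ∈ S, ∑ k ∈ A p, g p k := by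
  rw [Finset.prod_sum, Finset.finsupp, Finset.sum_map]
  apply Finset.sum_congr rfl
  intro u _
  rw [Function.Embedding.coeFn_mk, Finsupp.prod_of_support_subset _ (Finsupp.support_indicator_subset S u) g
    (fun i _ => hg0 i), ← Finset.prod_attach]
  apply Finset.prod_congr rfl
  intro i _
  rw [Finsupp.indicator_of_mem]

lemma euler_hasSum (A : P → Finset ℕ) (g : P → ℕ → ℝ) (hA : ∀ p, 0 ∈ A p) (hg0 : ∀ p, g p 0 = 1)
    (hg : ∀ p k, 0 ≤ g p k) (a : ℝ) (ha : HasProd (fun p => ∑ k ∈ A p, g p k) a) :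
    HasSum (fun b : P →₀ ℕ => if ∀ p, b p ∈ A p then b.prod g else 0) a := by
  have hE : ∀ p, 1 ≤ ∑ k ∈ A p, g p k := by
    intro p
    rw [← hg0 p]
    exact Finset.single_le_sum (f := g p) (fun k _ => hg p k) (hA p)
  have hprod : ∀ b : P →₀ ℕ, 0 ≤ b.prod g := fun b => Finset.prod_nonneg (fun _ _ => hg _ _)
  have hnn : ∀ b : P →₀ ℕ, 0 ≤ (if ∀ p, b p ∈ A p then b.prod g else 0) := by
    intro b; split_ifs
    · exact hprod b
    · exact le_rfl
  have hle : ∀ S : Finset P, ∏ p ∈ S, ∑ k ∈ A p, g p k ≤ a := by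
    intro S
    refine ge_of_tendsto ha ?_
    filter_upwards [eventually_ge_atTop S] with T hT
    exact Finset.prod_le_prod_of_subset_of_one_le hT (fun p _ => by linarith [hE p]) (fun p _ _ => hE p)
  have hfs : ∀ S : Finset P, ∑ b ∈ S.finsupp A, (if ∀ p, b p ∈ A p then b.prod g else 0) =
      ∏ p ∈ S, ∑ k ∈ A p, g p k := by
    intro S
    rw [← euler_fin A g hg0]
    apply Finset.sum_congr rfl
    intro b hb
    rw [Finset.mem_finsupp_iff] at hb
    rw [if_pos]
    intro p
    by_cases hp : p ∈ S
    · exact hb.2 p hp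
    · have : b p = 0 := by
        by_contra h
        exact hp (hb.1 (Finsupp.mem_support_iff.2 h))
      rw [this]; exact hA p
  apply hasSum_of_isLUB_of_nonneg _ hnn
  constructor
  · rintro _ ⟨T, rfl⟩
    set S := T.biUnion (fun b => b.support)
    refine le_trans ?_ (hle S)
    rw [← hfs]
    simp only
    rw [← Finset.sum_filter_add_sum_filter_not T (fun b => ∀ p, b p ∈ A p)]
    rw [Finset.sum_eq_zero (s := T.filter (fun b => ¬ ∀ p, b p ∈ A p)), add_zero]
    · apply Finset.sum_le_sum_of_subset_of_nonneg
      · intro b hb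
        rw [Finset.mem_filter] at hb
        rw [Finset.mem_finsupp_iff]
        exact ⟨Finset.subset_biUnion_of_mem (fun b : P →₀ ℕ => b.support) hb.1, fun p _ => hb.2 p⟩
      · intro b _ _; exact hnn b
    · intro b hb
      rw [Finset.mem_filter] at hb
      rw [if_neg hb.2]
  · intro u hu
    refine le_of_tendsto' ha (fun S => ?_)
    rw [← hfs]
    exact hu ⟨_, rfl⟩

/-- allowed residual exponents -/
def Al (h : ℕ) (D : Finset P) (p : P) : Finset ℕ :=
  if p ∈ D then Finset.range h else insert 0 (Finset.Ioo h (2*h))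

/-- local factor outside -/
def Eo (h : ℕ) (N : P → ℕ) (σ : ℝ) (p : P) : ℝ := 1 + ∑ k ∈ Finset.Ioo h (2*h), (pn N p ^ (-σ))^k
/-- local factor inside -/
def Ei (h : ℕ) (N : P → ℕ) (σ : ℝ) (p : P) : ℝ := ∑ k ∈ Finset.range h, (pn N p ^ (-σ))^k

lemma rn_rpow {N : P → ℕ} (b : P →₀ ℕ) (σ : ℝ) :
    rn N b ^ (-σ) = b.prod (fun p k => (pn N p ^ (-σ))^k) := by
  unfold rn Nm Finsupp.prod pn
  push_cast
  rw [← Real.finsetProd_rpow _ _ (fun i _ => by positivity)]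
  apply Finset.prod_congr rfl
  intro i _
  rw [← Real.rpow_natCast, ← Real.rpow_natCast, ← Real.rpow_mul (by positivity),
    ← Real.rpow_mul (by positivity), mul_comm]

variable {N : P → ℕ} {κ τ K : ℝ}

lemma Eo_one (H : Sys N κ τ K) (h : ℕ) (σ : ℝ) (p : P) : 1 ≤ Eo h N σ p := by
  unfold Eo
  have : 0 ≤ ∑ k ∈ Finset.Ioo h (2*h), (pn N p ^ (-σ))^k :=
    Finset.sum_nonneg (fun k _ => pow_nonneg (Real.rpow_nonneg (pn_pos H.two p).le _) _)
  linarith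

lemma Eo_mult (H : Sys N κ τ K) (h : ℕ) (σ : ℝ) (hσ0 : 0 < σ) (hσ : 1 < σ * (h+1)) :
    Multipliable (Eo h N σ) := by
  unfold Eo
  apply Real.multipliable_one_add_of_summable
  have hs := (pn_summable H _ hσ).mul_left (h:ℝ)
  refine Summable.of_nonneg_of_le (fun p => ?_) (fun p => ?_) hs
  · exact Finset.sum_nonneg (fun k _ => pow_nonneg (Real.rpow_nonneg (pn_pos H.two p).le _) _)
  · have hp := pn_two H.two p
    have : ∀ k ∈ Finset.Ioo h (2*h), (pn N p ^ (-σ))^k ≤ pn N p ^ (-(σ * (h+1))) := by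
      intro k hk
      rw [Finset.mem_Ioo] at hk
      rw [← Real.rpow_natCast, ← Real.rpow_mul (by linarith)]
      apply Real.rpow_le_rpow_of_exponent_le (by linarith)
      have : (h:ℝ) + 1 ≤ k := by exact_mod_cast hk.1
      nlinarith
    have h2 := Finset.sum_le_card_nsmul _ _ _ this
    rw [nsmul_eq_mul] at h2
    refine h2.trans ?_
    apply mul_le_mul_of_nonneg_right _ (Real.rpow_nonneg (by linarith) _)
    rw [Nat.card_Ioo]
    norm_cast
    omega

lemma full_sum (H : Sys N κ τ K) (h : ℕ) (hh : 2 ≤ h) (D : Finset P) (σ : ℝ) (hσ0 : 0 < σ)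
    (hσ : 1 < σ * (h+1)) :
    HasSum (fun b : P →₀ ℕ => if ∀ p, b p ∈ Al h D p then rn N b ^ (-σ) else 0)
      ((∏' p, Eo h N σ p) * ∏ p ∈ D, (Ei h N σ p / Eo h N σ p)) := by
  simp only [rn_rpow]
  apply euler_hasSum
  · intro p
    unfold Al
    split_ifs
    · simp; omega
    · simp
  · intro p; simp
  · intro p k; exact pow_nonneg (Real.rpow_nonneg (pn_pos H.two p).le _) _
  · have h1 := (Eo_mult H h σ hσ0 hσ).hasProd
    have h2 : HasProd (fun p => if p ∈ D then Ei h N σ p / Eo h N σ p else 1)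
        (∏ p ∈ D, if p ∈ D then Ei h N σ p / Eo h N σ p else 1) :=
      hasProd_prod_of_ne_finset_one (fun p hp => by simp [hp])
    have h3 : (∏ p ∈ D, if p ∈ D then Ei h N σ p / Eo h N σ p else 1) =
        ∏ p ∈ D, (Ei h N σ p / Eo h N σ p) :=
      Finset.prod_congr rfl (fun p hp => by simp [hp])
    rw [h3] at h2
    convert h1.mul h2 using 1
    ext p
    unfold Al
    have := Eo_one H h σ p
    split_ifs with hp
    · rw [mul_div_cancel₀]
      · rfl
      · linarith
    · rw [Finset.sum_insert (by simp), mul_one, pow_zero]; rfl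
end

section
variable {P : Type*} {N : P → ℕ} {κ τ K : ℝ}

/-- count of h-full elements divisible by D -/
def Cnt (h : ℕ) (N : P → ℕ) (D : Finset P) (x : ℝ) : ℝ :=
  ∑ _m ∈ lev (rn N) x with (HFull h _m ∧ ∀ p ∈ D, _m p ≠ 0), 1

/-- argument -/
def zz (h : ℕ) (N : P → ℕ) (D : Finset P) (x : ℝ) (b : P →₀ ℕ) : ℝ :=
  x ^ (1/(h:ℝ)) / (rn N (ind D) * rn N b ^ (1/(h:ℝ)))

/-- reassembly -/
def asm (h : ℕ) (D : Finset P) (b a : P →₀ ℕ) : P →₀ ℕ := h • a + b + h • ind D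

lemma asm_apply (h : ℕ) (D : Finset P) (b a : P →₀ ℕ) (p : P) :
    asm h D b a p = h * a p + b p + h * (if p ∈ D then 1 else 0) := by
  simp [asm, ind_apply]

lemma Al_mem {h : ℕ} {D : Finset P} {p : P} {k : ℕ} :
    k ∈ Al h D p ↔ (p ∈ D ∧ k < h) ∨ (p ∉ D ∧ (k = 0 ∨ (h < k ∧ k < 2 * h))) := by
  unfold Al
  by_cases hp : p ∈ D <;> simp [hp]

lemma le_zz (hN : ∀ p, 2 ≤ N p) (h : ℕ) (hh : 2 ≤ h) (D : Finset P) (x : ℝ) (hx : 0 < x)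
    (b a : P →₀ ℕ) : rn N a ≤ zz h N D x b ↔ rn N (asm h D b a) ≤ x := by
  have ha := rn_pos hN a
  have hb := rn_pos hN b
  have hd := rn_pos hN (ind D)
  have hh0 : (0:ℝ) < h := by positivity
  have hb' : 0 < rn N b ^ (1/(h:ℝ)) := Real.rpow_pos_of_pos hb _
  unfold zz asm
  rw [le_div_iff₀ (by positivity), rn_add, rn_add, rn_nsmul, rn_nsmul, one_div,
    Real.le_rpow_inv_iff_of_pos (by positivity) hx.le hh0, Real.rpow_natCast, mul_pow, mul_pow,
    ← Real.rpow_natCast (rn N b ^ (h:ℝ)⁻¹), ← Real.rpow_mul hb.le, inv_mul_cancel₀ hh0.ne',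
    Real.rpow_one]
  rw [show rn N a ^ h * (rn N (ind D) ^ h * rn N b) = rn N a ^ h * rn N b * rn N (ind D) ^ h by ring]

lemma asm_inj (h : ℕ) (D : Finset P) (b a b' a' : P →₀ ℕ) (hh : 0 < h) (hb : ∀ p, b p ∈ Al h D p)
    (hb' : ∀ p, b' p ∈ Al h D p) (he : asm h D b a = asm h D b' a') : b = b' ∧ a = a' := by
  have key : ∀ p, b p = b' p := by
    intro p
    have h1 := DFunLike.congr_fun he p
    rw [asm_apply, asm_apply] at h1
    have h2 : h * a p + b p = h * a' p + b' p := by omega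
    have h3 : b p % h = b' p % h := by
      have := congrArg (· % h) h2
      simpa [Nat.mul_add_mod] using this
    have m1 := Al_mem.1 (hb p)
    have m2 := Al_mem.1 (hb' p)
    have aux : ∀ k, h < k → k < 2 * h → k % h = k - h := by
      intro k e1 e2
      rw [Nat.mod_eq_sub_mod e1.le, Nat.mod_eq_of_lt (by omega)]
    by_cases hp : p ∈ D
    · simp only [hp, true_and, not_true, false_and, or_false] at m1 m2
      rwa [Nat.mod_eq_of_lt m1, Nat.mod_eq_of_lt m2] at h3
    · simp only [hp, false_and, not_false_eq_true, true_and, false_or] at m1 m2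
      rcases m1 with m1 | m1 <;> rcases m2 with m2 | m2
      · omega
      · rw [m1, Nat.zero_mod, aux _ m2.1 m2.2] at h3; omega
      · rw [m2, Nat.zero_mod, aux _ m1.1 m1.2] at h3; omega
      · rw [aux _ m1.1 m1.2, aux _ m2.1 m2.2] at h3; omega
  have hbb : b = b' := Finsupp.ext key
  refine ⟨hbb, ?_⟩
  ext p
  have h1 := DFunLike.congr_fun he p
  rw [asm_apply, asm_apply, key p] at h1
  have h2 : h * a p = h * a' p := by omega
  exact Nat.eq_of_mul_eq_mul_left hh h2

lemma asm_surj (h : ℕ) (D : Finset P) (m : P →₀ ℕ) (hh : 0 < h) (hm : HFull h m)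
    (hD : ∀ p ∈ D, m p ≠ 0) : ∃ b a, (∀ p, b p ∈ Al h D p) ∧ asm h D b a = m := by
  let fb : P → ℕ := fun p => if p ∈ D then m p % h else if m p % h = 0 then 0 else h + m p % h
  let fa : P → ℕ := fun p => if p ∈ D then m p / h - 1 else if m p % h = 0 then m p / h else m p / h - 1
  have hb : ∀ p, fb p ≠ 0 → p ∈ m.support := by
    intro p hp
    rw [Finsupp.mem_support_iff]
    intro h0; apply hp; simp [fb, h0]
  have ha : ∀ p, fa p ≠ 0 → p ∈ m.support := by
    intro p hp
    rw [Finsupp.mem_support_iff]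
    intro h0; apply hp; simp [fa, h0]
  refine ⟨Finsupp.onFinset m.support fb hb, Finsupp.onFinset m.support fa ha, ?_, ?_⟩
  · intro p
    rw [Al_mem, Finsupp.onFinset_apply]
    have := Nat.mod_lt (m p) hh
    simp only [fb]
    by_cases hp : p ∈ D
    · simp [hp, this]
    · simp only [hp, if_false, false_and, not_false_eq_true, true_and, false_or]
      split_ifs <;> omega
  · ext p
    rw [asm_apply, Finsupp.onFinset_apply, Finsupp.onFinset_apply]
    have hdm := Nat.div_add_mod (m p) h
    have hml := Nat.mod_lt (m p) hh
    simp only [fa, fb]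
    by_cases hp : p ∈ D
    · have h1 : h ≤ m p := (hm p).resolve_left (hD p hp)
      have h2 : 1 ≤ m p / h := (Nat.one_le_div_iff hh).2 h1
      simp only [hp, if_true]
      have : h * (m p / h - 1) + h = h * (m p / h) := by
        obtain ⟨q, hq⟩ := Nat.exists_eq_add_of_le h2
        rw [hq, Nat.add_sub_cancel_left]; ring
      omega
    · simp only [hp, if_false]
      split_ifs with h0
      · omega
      · have h1 : h ≤ m p := by
          refine (hm p).resolve_left ?_
          intro h3; rw [h3] at h0; simp at h0
        have h2 : 1 ≤ m p / h := (Nat.one_le_div_iff hh).2 h1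
        have : h * (m p / h - 1) + h = h * (m p / h) := by
          obtain ⟨q, hq⟩ := Nat.exists_eq_add_of_le h2
          rw [hq, Nat.add_sub_cancel_left]; ring
        omega

lemma asm_full (h : ℕ) (D : Finset P) (b a : P →₀ ℕ) (hh : 0 < h) (hb : ∀ p, b p ∈ Al h D p) :
    HFull h (asm h D b a) ∧ ∀ p ∈ D, asm h D b a p ≠ 0 := by
  constructor
  · intro p
    rw [asm_apply]
    have m1 := Al_mem.1 (hb p)
    by_cases hp : p ∈ D
    · right; simp only [hp, if_true]; omega
    · simp only [hp, false_and, not_false_eq_true, true_and, false_or] at m1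
      simp only [hp, if_false]
      rcases m1 with m1 | m1
      · rcases Nat.eq_zero_or_pos (a p) with h0 | h0
        · left; simp [h0, m1]
        · right; have := Nat.le_mul_of_pos_right h h0; omega
      · right; omega
  · intro p hp
    rw [asm_apply]
    simp only [hp, if_true]; omega

lemma Cnt_eq (H : Sys N κ τ K) (h : ℕ) (hh : 2 ≤ h) (D : Finset P) (x : ℝ) (hx : 0 < x) :
    Cnt h N D x = ∑ b ∈ lev (rn N) x with (∀ p, b p ∈ Al h D p), I0 N (zz h N D x b) := by
  unfold Cnt I0
  rw [Finset.sum_sigma']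
  symm
  apply Finset.sum_nbij (fun i => asm h D i.1 i.2)
  · rintro ⟨b, a⟩ hi
    simp only [Finset.mem_sigma, Finset.mem_filter, mem_lev H.fin] at hi ⊢
    exact ⟨(le_zz H.two h hh D x hx b a).1 hi.2, asm_full h D b a (by omega) hi.1.2⟩
  · rintro ⟨b, a⟩ hi ⟨b', a'⟩ hi' he
    simp only [Finset.mem_coe, Finset.mem_sigma, Finset.mem_filter, mem_lev H.fin] at hi hi'
    obtain ⟨rfl, rfl⟩ := asm_inj h D b a b' a' (by omega) hi.1.2 hi'.1.2 he
    rfl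
  · intro m hm
    simp only [Finset.mem_coe, Finset.mem_filter, mem_lev H.fin] at hm
    obtain ⟨b, a, hb, rfl⟩ := asm_surj h D m (by omega) hm.2.1 hm.2.2
    refine ⟨⟨b, a⟩, ?_, rfl⟩
    simp only [Finset.mem_coe, Finset.mem_sigma, Finset.mem_filter, mem_lev H.fin]
    refine ⟨⟨?_, hb⟩, (le_zz H.two h hh D x hx b a).2 hm.1⟩
    refine le_trans ?_ hm.1
    rw [asm, rn_add, rn_add]
    have h1 := rn_one_le H.two (h • a)
    have h2 := rn_one_le H.two b
    have h3 := rn_one_le H.two (h • ind D)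
    have h4 : rn N b ≤ rn N (h • a) * rn N b := le_mul_of_one_le_left (by linarith) h1
    exact h4.trans (le_mul_of_one_le_right (by linarith) h3)
  · intros; rfl

lemma Cnt_bound (H : Sys N κ τ K) (h : ℕ) (hh : 2 ≤ h) (hτ : (h:ℝ) < τ * (h+1)) (D : Finset P)
    (x : ℝ) (hx : 0 < x) :
    |Cnt h N D x - κ * (x ^ (1/(h:ℝ)) / rn N (ind D)) *
      ((∏' p, Eo h N (1/(h:ℝ)) p) * ∏ p ∈ D, (Ei h N (1/(h:ℝ)) p / Eo h N (1/(h:ℝ)) p))| ≤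
    K * (x ^ (1/(h:ℝ)) / rn N (ind D)) ^ τ *
      ((∏' p, Eo h N (τ/(h:ℝ)) p) * ∏ p ∈ D, (Ei h N (τ/(h:ℝ)) p / Eo h N (τ/(h:ℝ)) p)) := by
  have hh0 : (0:ℝ) < h := by positivity
  have hτ0 := H.hτ0
  have hd := rn_pos H.two (ind D)
  have hy : 0 < x ^ (1/(h:ℝ)) := Real.rpow_pos_of_pos hx _
  have S1 := (full_sum H h hh D (1/(h:ℝ)) (by positivity) (by
    rw [div_mul_eq_mul_div, one_mul, one_lt_div hh0]; linarith)).mul_left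
      (κ * (x ^ (1/(h:ℝ)) / rn N (ind D)))
  have S2 := (full_sum H h hh D (τ/(h:ℝ)) (by positivity) (by
    rw [div_mul_eq_mul_div, one_lt_div hh0]; linarith)).mul_left
      (K * (x ^ (1/(h:ℝ)) / rn N (ind D)) ^ τ)
  have S0 : HasSum (fun b : P →₀ ℕ => if ∀ p, b p ∈ Al h D p then I0 N (zz h N D x b) else 0)
      (Cnt h N D x) := by
    rw [Cnt_eq H h hh D x hx, Finset.sum_filter]
    apply hasSum_sum_of_ne_finset_zero
    intro b hb
    split_ifs
    · rw [I0, Finset.sum_eq_zero]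
      intro a ha
      exfalso
      rw [mem_lev H.fin, le_zz H.two h hh D x hx b a] at ha
      apply hb
      rw [mem_lev H.fin]
      refine le_trans ?_ ha
      rw [asm, rn_add, rn_add]
      have h1 := rn_one_le H.two (h • a)
      have h2 := rn_one_le H.two b
      have h3 := rn_one_le H.two (h • ind D)
      have h4 : rn N b ≤ rn N (h • a) * rn N b := le_mul_of_one_le_left (by linarith) h1
      exact h4.trans (le_mul_of_one_le_right (by linarith) h3)
    · rfl
  have := (S0.sub S1).norm_le_of_bounded S2 (by
    intro b
    split_ifs with hb
    · have hbp := rn_pos H.two b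
      have hbp' : 0 < rn N b ^ (1/(h:ℝ)) := Real.rpow_pos_of_pos hbp _
      have hz : zz h N D x b = x ^ (1/(h:ℝ)) / rn N (ind D) * rn N b ^ (-(1/(h:ℝ))) := by
        rw [zz, Real.rpow_neg hbp.le]; field_simp
      have hz0 : 0 < zz h N D x b := by unfold zz; positivity
      have e := H.bd _ hz0
      rw [Real.norm_eq_abs]
      calc _ = |I0 N (zz h N D x b) - κ * zz h N D x b| := by
            congr 1; nth_rw 3 [hz]; ring
        _ ≤ K * zz h N D x b ^ τ := e
        _ = _ := by
            rw [hz, Real.mul_rpow (by positivity) (by positivity), ← Real.rpow_mul hbp.le,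
              show -(1/(h:ℝ)) * τ = -(τ/(h:ℝ)) by ring]
            ring
    · simp)
  rwa [Real.norm_eq_abs] at this
end

section
variable {P : Type*} {N : P → ℕ} {κ τ K : ℝ}

/-- density weight -/
def fp (h : ℕ) (N : P → ℕ) (p : P) : ℝ := 1 / (pn N p - pn N p ^ (1 - 1/(h:ℝ)) + 1)

/-- inverse root -/
def tp (h : ℕ) (N : P → ℕ) (p : P) : ℝ := pn N p ^ (-(1/(h:ℝ)))

lemma tp_pos (hN : ∀ p, 2 ≤ N p) (h : ℕ) (p : P) : 0 < tp h N p :=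
  Real.rpow_pos_of_pos (pn_pos hN p) _

lemma tp_lt (hN : ∀ p, 2 ≤ N p) (h : ℕ) (hh : 2 ≤ h) (p : P) : tp h N p < 1 := by
  have := pn_two hN p
  have hh0 : (0:ℝ) < h := by positivity
  apply Real.rpow_lt_one_of_one_lt_of_neg (by linarith)
  rw [neg_lt_zero]; positivity

lemma tp_pow (hN : ∀ p, 2 ≤ N p) (h : ℕ) (hh : 2 ≤ h) (p : P) : tp h N p ^ h = (pn N p)⁻¹ := by
  have hh0 : (0:ℝ) < h := by positivity
  rw [tp, ← Real.rpow_natCast, ← Real.rpow_mul (pn_pos hN p).le, ← Real.rpow_neg_one]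
  congr 1; field_simp

lemma root_eq (hN : ∀ p, 2 ≤ N p) (h : ℕ) (p : P) : pn N p ^ (1/(h:ℝ)) = (tp h N p)⁻¹ := by
  rw [tp, Real.rpow_neg (pn_pos hN p).le, inv_inv]

lemma root2_eq (hN : ∀ p, 2 ≤ N p) (h : ℕ) (p : P) :
    pn N p ^ (1 - 1/(h:ℝ)) = pn N p * tp h N p := by
  rw [tp, sub_eq_add_neg, Real.rpow_add (pn_pos hN p), Real.rpow_one]

lemma nt_ge (hN : ∀ p, 2 ≤ N p) (h : ℕ) (hh : 2 ≤ h) (p : P) : 1 ≤ pn N p * tp h N p := by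
  rw [← root2_eq hN]
  have := pn_two hN p
  apply Real.one_le_rpow (by linarith)
  have : (2:ℝ) ≤ h := by exact_mod_cast hh
  rw [sub_nonneg, div_le_one (by linarith)]; linarith

lemma Eo_eq (hN : ∀ p, 2 ≤ N p) (h : ℕ) (hh : 2 ≤ h) (p : P) :
    Eo h N (1/(h:ℝ)) p = 1 + (pn N p)⁻¹ * (tp h N p - (pn N p)⁻¹) / (1 - tp h N p) := by
  have h1 := tp_lt hN h hh p
  have hI : Finset.Ioo h (2*h) = Finset.Ico (h+1) (2*h) := by
    ext k; simp only [Finset.mem_Ioo, Finset.mem_Ico]; omega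
  unfold Eo
  rw [hI]
  change 1 + ∑ k ∈ Finset.Ico (h+1) (2*h), tp h N p ^ k = _
  rw [geom_sum_Ico h1.ne (by omega), two_mul, pow_add, pow_succ, tp_pow hN h hh]
  congr 1
  rw [div_eq_div_iff (by linarith) (by linarith)]
  ring

lemma Ei_eq (hN : ∀ p, 2 ≤ N p) (h : ℕ) (hh : 2 ≤ h) (p : P) :
    Ei h N (1/(h:ℝ)) p = (1 - (pn N p)⁻¹) / (1 - tp h N p) := by
  have h1 := tp_lt hN h hh p
  unfold Ei
  change ∑ k ∈ Finset.range h, tp h N p ^ k = _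
  rw [geom_sum_eq h1.ne, tp_pow hN h hh, div_eq_div_iff (by linarith) (by linarith)]
  ring

lemma gammah_eq (hN : ∀ p, 2 ≤ N p) (h : ℕ) (hh : 2 ≤ h) :
    gammah N h = ∏' p, Eo h N (1/(h:ℝ)) p := by
  unfold gammah
  apply tprod_congr
  intro p
  rw [Eo_eq hN h hh]
  change 1 + (pn N p - pn N p ^ (1/(h:ℝ))) / (pn N p ^ 2 * (pn N p ^ (1/(h:ℝ)) - 1)) = _
  rw [root_eq hN]
  have h0 := tp_pos hN h p
  have h1 := tp_lt hN h hh p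
  have h2 := pn_pos hN p
  have h3 : 1 - tp h N p ≠ 0 := by linarith
  have h4 : (tp h N p)⁻¹ - 1 ≠ 0 := by
    have := (one_lt_inv₀ h0).2 h1
    linarith
  congr 1
  rw [div_eq_div_iff (by positivity) h3]
  field_simp

lemma fp_eq0 (hN : ∀ p, 2 ≤ N p) (h : ℕ) (p : P) :
    fp h N p = 1 / (pn N p - pn N p * tp h N p + 1) := by
  rw [fp, root2_eq hN]

lemma den_pos (hN : ∀ p, 2 ≤ N p) (h : ℕ) (hh : 2 ≤ h) (p : P) :
    0 < pn N p - pn N p * tp h N p + 1 := by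
  have h1 := tp_lt hN h hh p
  have h2 := pn_pos hN p
  nlinarith

lemma fp_eq (hN : ∀ p, 2 ≤ N p) (h : ℕ) (hh : 2 ≤ h) (p : P) :
    (pn N p)⁻¹ * (Ei h N (1/(h:ℝ)) p / Eo h N (1/(h:ℝ)) p) = fp h N p := by
  rw [Eo_eq hN h hh, Ei_eq hN h hh, fp_eq0 hN]
  have hd := den_pos hN h hh p
  have h0 := tp_pos hN h p
  have h1 := tp_lt hN h hh p
  have h2 := pn_pos hN p
  have h5 := pn_two hN p
  have h6 := nt_ge hN h hh p
  have h3 : 0 < 1 - tp h N p := by linarith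
  generalize tp h N p = t at *
  generalize pn N p = n at *
  have h7 : 0 < n * n * (1 - t) + n * t - 1 := by nlinarith
  have e1 : 1 + n⁻¹ * (t - n⁻¹) / (1 - t) = (n * n * (1 - t) + n * t - 1) / (n * n * (1 - t)) := by
    field_simp
    ring
  rw [e1]
  have h7' := h7.ne'
  have hd' := hd.ne'
  have h3' := h3.ne'
  rw [div_div_div_eq, inv_mul_eq_div, div_div, div_eq_div_iff (by positivity) hd']
  field_simp
  ring

lemma fp_pos (hN : ∀ p, 2 ≤ N p) (h : ℕ) (hh : 2 ≤ h) (p : P) : 0 < fp h N p := by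
  rw [fp_eq0 hN]; exact one_div_pos.2 (den_pos hN h hh p)

/-- constant -/
def C0 (h : ℕ) : ℝ := 1 / (1 - (2:ℝ) ^ (-(1/(h:ℝ))))

lemma C0_aux (h : ℕ) (hh : 2 ≤ h) : (2:ℝ) ^ (-(1/(h:ℝ))) < 1 := by
  apply Real.rpow_lt_one_of_one_lt_of_neg (by norm_num)
  rw [neg_lt_zero]; positivity

lemma C0_pos (h : ℕ) (hh : 2 ≤ h) : 0 < C0 h := by
  have := C0_aux h hh
  unfold C0; apply one_div_pos.2; linarith

lemma fp_le (hN : ∀ p, 2 ≤ N p) (h : ℕ) (hh : 2 ≤ h) (p : P) : fp h N p ≤ C0 h * (pn N p)⁻¹ := by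
  rw [fp_eq0 hN, C0, ← one_div, div_mul_div_comm, one_mul]
  have h2 := pn_two hN p
  have ha := C0_aux h hh
  have ht : tp h N p ≤ (2:ℝ) ^ (-(1/(h:ℝ))) := by
    apply Real.rpow_le_rpow_of_nonpos (by norm_num) h2
    rw [neg_nonpos]; positivity
  apply one_div_le_one_div_of_le
  · apply mul_pos <;> linarith
  · nlinarith

lemma ep_eq (hN : ∀ p, 2 ≤ N p) (h : ℕ) (hh : 2 ≤ h) (p : P) :
    fp h N p - (pn N p)⁻¹ = (tp h N p - (pn N p)⁻¹) * fp h N p := by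
  have hd := (den_pos hN h hh p).ne'
  have h2 := (pn_pos hN p).ne'
  rw [fp_eq0 hN]
  generalize hd' : pn N p - pn N p * tp h N p + 1 = d at *
  have e : pn N p * tp h N p = pn N p + 1 - d := by linarith
  have e2 : (tp h N p - (pn N p)⁻¹) = (pn N p - d) / pn N p := by
    rw [eq_div_iff h2, sub_mul, inv_mul_cancel₀ h2]; linarith
  rw [e2]
  field_simp

lemma ep_nonneg (hN : ∀ p, 2 ≤ N p) (h : ℕ) (hh : 2 ≤ h) (p : P) : 0 ≤ fp h N p - (pn N p)⁻¹ := by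
  rw [ep_eq hN h hh]
  apply mul_nonneg _ (fp_pos hN h hh p).le
  have := nt_ge hN h hh p
  rw [sub_nonneg, inv_le_iff_one_le_mul₀ (pn_pos hN p)]; linarith

lemma ep_le (hN : ∀ p, 2 ≤ N p) (h : ℕ) (hh : 2 ≤ h) (p : P) :
    fp h N p - (pn N p)⁻¹ ≤ C0 h * pn N p ^ (-(1 + 1/(h:ℝ))) := by
  rw [ep_eq hN h hh]
  have hf := fp_le hN h hh p
  have hf0 := fp_pos hN h hh p
  have h0 := tp_pos hN h p
  have h2 := pn_pos hN p
  calc _ ≤ tp h N p * (C0 h * (pn N p)⁻¹) := by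
        apply mul_le_mul _ hf hf0.le h0.le
        have : 0 < (pn N p)⁻¹ := by positivity
        linarith
    _ = C0 h * (tp h N p * (pn N p)⁻¹) := by ring
    _ = _ := by
        rw [tp, ← Real.rpow_neg_one (pn N p), ← Real.rpow_add h2]; congr 2; ring

lemma rn_ind (D : Finset P) : rn N (ind D) = ∏ p ∈ D, pn N p := by
  unfold rn Nm
  rw [Finsupp.prod_of_support_subset (s := D)]
  · push_cast
    apply Finset.prod_congr rfl
    intro p hp
    simp [ind_apply, hp, pn]
  · exact Finsupp.support_indicator_subset _ _
  · intro i _; simp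

lemma Cnt_cor (H : Sys N κ τ K) (h : ℕ) (hh : 2 ≤ h) (hτ : (h:ℝ) < τ * (h+1)) :
    ∃ K', 0 ≤ K' ∧ ∀ D : Finset P, D.card ≤ 2 → ∀ x, 0 < x →
    |Cnt h N D x - κ * gammah N h * x ^ (1/(h:ℝ)) * ∏ p ∈ D, fp h N p| ≤
      K' * (x ^ (1/(h:ℝ))) ^ τ * ∏ p ∈ D, pn N p ^ (-τ) := by
  have hh0 : (0:ℝ) < h := by positivity
  have hτ0 := H.hτ0
  have hK := H.hK
  have hG : 0 ≤ ∏' p, Eo h N (τ/(h:ℝ)) p := by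
    have := (full_sum H h hh ∅ (τ/(h:ℝ)) (by positivity) (by
      rw [div_mul_eq_mul_div, one_lt_div hh0]; linarith))
    rw [Finset.prod_empty, mul_one] at this
    apply this.nonneg
    intro b
    split_ifs
    · exact Real.rpow_nonneg (rn_pos H.two b).le _
    · exact le_rfl
  refine ⟨K * ((∏' p, Eo h N (τ/(h:ℝ)) p) * (h:ℝ)^2), by positivity, ?_⟩
  intro D hD x hx
  have hy : 0 < x ^ (1/(h:ℝ)) := Real.rpow_pos_of_pos hx _
  have hb := Cnt_bound H h hh hτ D x hx
  have hr := rn_pos H.two (ind D)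
  have e1 : κ * (x ^ (1/(h:ℝ)) / rn N (ind D)) *
      ((∏' p, Eo h N (1/(h:ℝ)) p) * ∏ p ∈ D, (Ei h N (1/(h:ℝ)) p / Eo h N (1/(h:ℝ)) p)) =
      κ * gammah N h * x ^ (1/(h:ℝ)) * ∏ p ∈ D, fp h N p := by
    rw [gammah_eq H.two h hh, rn_ind]
    simp only [← fp_eq H.two h hh]
    rw [Finset.prod_mul_distrib, Finset.prod_inv_distrib]
    ring
  rw [e1] at hb
  refine hb.trans ?_
  have e2 : ∏ p ∈ D, (Ei h N (τ/(h:ℝ)) p / Eo h N (τ/(h:ℝ)) p) ≤ (h:ℝ)^2 := by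
    have hle : ∀ p ∈ D, Ei h N (τ/(h:ℝ)) p / Eo h N (τ/(h:ℝ)) p ≤ (h:ℝ) := by
      intro p _
      have hp := pn_two H.two p
      have ho := Eo_one H h (τ/(h:ℝ)) p
      have hi : Ei h N (τ/(h:ℝ)) p ≤ h := by
        unfold Ei
        have : ∀ k ∈ Finset.range h, (pn N p ^ (-(τ/(h:ℝ))))^k ≤ 1 := by
          intro k _
          apply pow_le_one₀ (Real.rpow_nonneg (by linarith) _)
          apply Real.rpow_le_one_of_one_le_of_nonpos (by linarith)
          rw [neg_nonpos]; positivity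
        have := Finset.sum_le_card_nsmul _ _ _ this
        simpa using this
      rw [div_le_iff₀ (by linarith)]
      nlinarith
    calc _ ≤ ∏ p ∈ D, (h:ℝ) := by
          apply Finset.prod_le_prod _ hle
          intro p _
          apply div_nonneg
          · exact Finset.sum_nonneg (fun k _ => pow_nonneg (Real.rpow_nonneg (pn_pos H.two p).le _) _)
          · linarith [Eo_one H h (τ/(h:ℝ)) p]
      _ = (h:ℝ)^D.card := by rw [Finset.prod_const]
      _ ≤ _ := pow_le_pow_right₀ (by exact_mod_cast (by omega : 1 ≤ h)) hD
  have e3 : (x ^ (1/(h:ℝ)) / rn N (ind D)) ^ τ = (x ^ (1/(h:ℝ))) ^ τ * ∏ p ∈ D, pn N p ^ (-τ) := by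
    rw [Real.div_rpow hy.le hr.le, rn_ind, div_eq_mul_inv, ← Real.rpow_neg
      (Finset.prod_nonneg (fun p _ => (pn_pos H.two p).le)),
      Real.finsetProd_rpow _ _ (fun p _ => (pn_pos H.two p).le)]
  rw [e3]
  have hp0 : 0 ≤ ∏ p ∈ D, pn N p ^ (-τ) :=
    Finset.prod_nonneg (fun p _ => Real.rpow_nonneg (pn_pos H.two p).le _)
  have hyτ : 0 < (x ^ (1/(h:ℝ))) ^ τ := Real.rpow_pos_of_pos hy _
  calc _ ≤ K * ((x ^ (1/(h:ℝ))) ^ τ * ∏ p ∈ D, pn N p ^ (-τ)) *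
        ((∏' p, Eo h N (τ/(h:ℝ)) p) * (h:ℝ)^2) := by gcongr
    _ = _ := by ring

lemma full_le (hN : ∀ p, 2 ≤ N p) (h : ℕ) (hh : 2 ≤ h) (D : Finset P) (x : ℝ) (hx : 0 < x)
    (m : P →₀ ℕ) (hm : HFull h m) (hD : ∀ p ∈ D, m p ≠ 0) (hmx : rn N m ≤ x) :
    ∏ p ∈ D, pn N p ≤ x ^ (1/(h:ℝ)) := by
  obtain ⟨b, a, hb, rfl⟩ := asm_surj h D m (by omega) hm hD
  rw [← le_zz hN h hh D x hx] at hmx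
  have h1 := (rn_one_le hN a).trans hmx
  have hr := rn_pos hN (ind D)
  have hb1 : 1 ≤ rn N b ^ (1/(h:ℝ)) := Real.one_le_rpow (rn_one_le hN b) (by positivity)
  rw [zz, le_div_iff₀ (by positivity), one_mul] at h1
  rw [← rn_ind]
  exact le_trans (le_mul_of_one_le_right hr.le hb1) h1

lemma Cnt_zero (H : Sys N κ τ K) (h : ℕ) (hh : 2 ≤ h) (D : Finset P) (x : ℝ) (hx : 0 < x)
    (hD : ¬ ∏ p ∈ D, pn N p ≤ x ^ (1/(h:ℝ))) : Cnt h N D x = 0 := by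
  unfold Cnt
  apply Finset.sum_eq_zero
  intro m hm
  rw [Finset.mem_filter, mem_lev H.fin] at hm
  exact absurd (full_le H.two h hh D x hx m hm.2.1 hm.2.2 hm.1) hD
end

section
variable {P : Type*} {N : P → ℕ} {κ τ K : ℝ}

lemma lev_tendsto {ι : Type*} {ν g : ι → ℝ} (hf : ∀ x, {i | ν i ≤ x}.Finite) (hg : Summable g) :
    Tendsto (fun t => ∑ i ∈ lev ν t, g i) atTop (𝓝 (∑' i, g i)) := by
  have h1 : Tendsto (lev ν) atTop atTop := by
    apply tendsto_atTop_finset_of_monotone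
    · intro x y hxy; exact lev_mono hf hxy
    · intro i; exact ⟨ν i, (mem_lev hf).2 le_rfl⟩
  exact hg.hasSum.comp h1

lemma Wt_pn (H : Sys N κ τ K) : ∃ C, Wt (pn N) (fun p => (pn N p)⁻¹) C := by
  obtain ⟨C, hC, hb⟩ := mert_log H
  exact ⟨C, fin_pn H.fin, pn_two H.two, fun p => (inv_pos.2 (pn_pos H.two p)).le, hC, hb⟩

lemma mert_tendsto (H : Sys N κ τ K) (A : ℝ) (hA : IsMertens N A) :
    Tendsto (fun t => Fs (pn N) (fun p => (pn N p)⁻¹) t - Real.log (Real.log t)) atTop (𝓝 A) := by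
  refine Tendsto.congr ?_ hA
  intro x
  congr 1
  rw [Fs, ← finsum_mem_coe_finset]
  apply finsum_mem_congr
  · ext p
    rw [Finset.mem_coe, mem_lev (fin_pn H.fin)]; rfl
  · intro p _; rw [one_div]; rfl

lemma Wt_fp (H : Sys N κ τ K) (h : ℕ) (hh : 2 ≤ h) : ∃ C, Wt (pn N) (fp h N) C := by
  obtain ⟨C, hC, hb⟩ := mert_log H
  have hN := H.two
  have hh0 : (0:ℝ) < h := by positivity
  set ε : ℝ := 1 / (2 * h) with hε
  have hε0 : 0 < ε := by positivity
  have hs := (pn_summable H (1 + ε) (by linarith)).mul_left (C0 h / ε)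
  have key : ∀ p, (fp h N p - (pn N p)⁻¹) * Real.log (pn N p) ≤ C0 h / ε * pn N p ^ (-(1 + ε)) := by
    intro p
    have h2 := pn_pos hN p
    have := (C0_pos h hh).le
    calc _ ≤ (C0 h * pn N p ^ (-(1 + 1/(h:ℝ)))) * (pn N p ^ ε / ε) := by
          apply mul_le_mul (ep_le hN h hh p) (Real.log_le_rpow_div h2.le hε0) (log_pn_pos hN p).le
          positivity
      _ = C0 h / ε * (pn N p ^ (-(1 + 1/(h:ℝ))) * pn N p ^ ε) := by ring
      _ = _ := by
          rw [← Real.rpow_add h2]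
          congr 2
          rw [hε]; field_simp; ring
  refine ⟨C + ∑' p, C0 h / ε * pn N p ^ (-(1 + ε)), fin_pn H.fin, pn_two H.two,
    fun p => (fp_pos hN h hh p).le, ?_, ?_⟩
  · apply add_nonneg hC
    apply tsum_nonneg
    intro p
    have h2 := pn_pos hN p
    have := (C0_pos h hh).le
    positivity
  · intro x hx
    have e : ∑ p ∈ lev (pn N) x, fp h N p * Real.log (pn N p) - Real.log x =
      (∑ p ∈ lev (pn N) x, (pn N p)⁻¹ * Real.log (pn N p) - Real.log x) +
        ∑ p ∈ lev (pn N) x, (fp h N p - (pn N p)⁻¹) * Real.log (pn N p) := by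
      simp only [sub_mul, Finset.sum_sub_distrib]; ring
    rw [e]
    refine (abs_add_le _ _).trans (add_le_add (hb x hx) ?_)
    rw [abs_of_nonneg]
    · refine (Finset.sum_le_sum fun p _ => key p).trans ?_
      apply hs.sum_le_tsum
      intro p _
      have h2 := pn_pos hN p
      have := (C0_pos h hh).le
      positivity
    · apply Finset.sum_nonneg
      intro p _
      exact mul_nonneg (ep_nonneg hN h hh p) (log_pn_pos hN p).le

lemma Lh_term (H : Sys N κ τ K) (h : ℕ) (hh : 2 ≤ h) :
    Summable (fun p => fp h N p - (pn N p)⁻¹) ∧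
    ∑' p, (fp h N p - (pn N p)⁻¹) = LhSum N h ((h:ℝ)+1) - LhSum N h (2*(h:ℝ)) := by
  have hN := H.two
  have hh0 : (0:ℝ) < h := by positivity
  have hc := (C0_pos h hh).le
  have s1 : Summable (fun p => tp h N p * fp h N p) := by
    apply Summable.of_nonneg_of_le (fun p => mul_nonneg (tp_pos hN h p).le (fp_pos hN h hh p).le) _
      ((pn_summable H (1 + 1/(h:ℝ)) (by simp [hh0])).mul_left (C0 h))
    intro p
    have h2 := pn_pos hN p
    calc _ ≤ tp h N p * (C0 h * (pn N p)⁻¹) :=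
          mul_le_mul_of_nonneg_left (fp_le hN h hh p) (tp_pos hN h p).le
      _ = C0 h * (pn N p ^ (-(1/(h:ℝ))) * pn N p ^ (-1:ℝ)) := by
          rw [Real.rpow_neg_one, tp]; ring
      _ = _ := by
          rw [← Real.rpow_add h2]; congr 2; ring
  have s2 : Summable (fun p => (pn N p)⁻¹ * fp h N p) := by
    apply Summable.of_nonneg_of_le
      (fun p => mul_nonneg (inv_pos.2 (pn_pos hN p)).le (fp_pos hN h hh p).le) _
      ((pn_summable H 2 (by norm_num)).mul_left (C0 h))
    intro p
    have h2 := pn_pos hN p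
    calc _ ≤ (pn N p)⁻¹ * (C0 h * (pn N p)⁻¹) :=
          mul_le_mul_of_nonneg_left (fp_le hN h hh p) (inv_pos.2 h2).le
      _ = C0 h * (pn N p ^ (-1:ℝ) * pn N p ^ (-1:ℝ)) := by
          rw [Real.rpow_neg_one]; ring
      _ = _ := by
          rw [← Real.rpow_add h2]; congr 2; ring
  have e : (fun p => fp h N p - (pn N p)⁻¹) =
      fun p => tp h N p * fp h N p - (pn N p)⁻¹ * fp h N p := by
    ext p; rw [ep_eq hN h hh]; ring
  rw [e]
  refine ⟨s1.sub s2, ?_⟩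
  rw [s1.tsum_sub s2]
  congr 1
  · unfold LhSum
    apply tsum_congr
    intro p
    have e1 : ((h:ℝ)+1)/(h:ℝ) - 1 = 1/(h:ℝ) := by field_simp; ring
    rw [e1]
    have h2 := pn_pos hN p
    change _ = 1 / (pn N p ^ (1/(h:ℝ)) * (pn N p - pn N p ^ (1 - 1/(h:ℝ)) + 1))
    rw [tp, Real.rpow_neg h2.le, fp]
    simp only [one_div, mul_inv]
  · unfold LhSum
    apply tsum_congr
    intro p
    have e1 : (2 * (h:ℝ))/(h:ℝ) - 1 = 1 := by field_simp; ring
    rw [e1, Real.rpow_one]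
    change _ = 1 / (pn N p * (pn N p - pn N p ^ (1 - 1/(h:ℝ)) + 1))
    rw [fp]
    simp only [one_div, mul_inv]

lemma D_tendsto (H : Sys N κ τ K) (A : ℝ) (hA : IsMertens N A) (h : ℕ) (hh : 2 ≤ h) :
    Tendsto (fun t => Fs (pn N) (fp h N) t - Real.log (Real.log t)) atTop
      (𝓝 (D1const N h A + Real.log h)) := by
  obtain ⟨s, e⟩ := Lh_term H h hh
  have := (mert_tendsto H A hA).add (lev_tendsto (fin_pn H.fin) s)
  rw [e] at this
  have e2 : D1const N h A + Real.log h = A + (LhSum N h ((h:ℝ)+1) - LhSum N h (2*(h:ℝ))) := by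
    unfold D1const; ring
  rw [e2]
  refine this.congr ?_
  intro t
  unfold Fs
  rw [Finset.sum_sub_distrib]; ring

lemma moment_eq (H : Sys N κ τ K) (h : ℕ) (hh : 2 ≤ h) (x : ℝ) (hx : 0 < x) :
    (∑ᶠ m ∈ {m : P →₀ ℕ | HFull h m ∧ (Nm N m : ℝ) ≤ x}, (omegaM m : ℝ) ^ 2) =
    ∑ p ∈ lev (pn N) (x ^ (1/(h:ℝ))), ∑ q ∈ lev (pn N) (x ^ (1/(h:ℝ))), Cnt h N {p, q} x := by
  have e0 : {m : P →₀ ℕ | HFull h m ∧ (Nm N m : ℝ) ≤ x} =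
      ((lev (rn N) x).filter (fun m => HFull h m) : Finset (P →₀ ℕ)) := by
    ext m
    rw [Finset.mem_coe, Finset.mem_filter, mem_lev H.fin, and_comm]; rfl
  rw [e0, finsum_mem_coe_finset]
  set L := lev (pn N) (x ^ (1/(h:ℝ))) with hL
  have e1 : ∀ p q, Cnt h N {p, q} x = ∑ m ∈ (lev (rn N) x).filter (fun m => HFull h m),
      (if m p ≠ 0 then (1:ℝ) else 0) * (if m q ≠ 0 then (1:ℝ) else 0) := by
    intro p q
    unfold Cnt
    rw [← Finset.filter_filter, Finset.sum_filter]
    apply Finset.sum_congr rfl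
    intro m _
    by_cases h1 : m p = 0 <;> by_cases h2 : m q = 0 <;> simp [h1, h2]
  simp only [e1]
  have e2 : ∀ p ∈ L, ∑ q ∈ L, ∑ m ∈ (lev (rn N) x).filter (fun m => HFull h m),
      (if m p ≠ 0 then (1:ℝ) else 0) * (if m q ≠ 0 then (1:ℝ) else 0) =
      ∑ m ∈ (lev (rn N) x).filter (fun m => HFull h m), ∑ q ∈ L,
      (if m p ≠ 0 then (1:ℝ) else 0) * (if m q ≠ 0 then (1:ℝ) else 0) := by
    intro p _; rw [Finset.sum_comm]
  rw [Finset.sum_congr rfl e2, Finset.sum_comm]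
  apply Finset.sum_congr rfl
  intro m hm
  rw [Finset.mem_filter, mem_lev H.fin] at hm
  rw [← Finset.sum_mul_sum, ← sq]
  congr 1
  rw [← Finset.sum_filter, Finset.sum_const, nsmul_eq_mul, mul_one, omegaM]
  congr 2
  ext p
  rw [Finsupp.mem_support_iff, Finset.mem_filter, hL, mem_lev (fin_pn H.fin)]
  constructor
  · intro hp
    refine ⟨?_, hp⟩
    have := full_le H.two h hh {p} x hx m hm.2 (by simpa using hp) hm.1
    simpa using this
  · exact fun hp => hp.2

/-- diagonal -/
def Qd (ν f : P → ℝ) (y : ℝ) : ℝ := ∑ p ∈ lev ν y, if ν p * ν p ≤ y then f p ^ 2 else 0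

lemma moment_bd (H : Sys N κ τ K) (h : ℕ) (hh : 2 ≤ h) (hτ : (h:ℝ) < τ * (h+1)) :
    ∃ K', 0 ≤ K' ∧ ∀ x y, 0 < x → y = x ^ (1/(h:ℝ)) →
    |(∑ᶠ m ∈ {m : P →₀ ℕ | HFull h m ∧ (Nm N m : ℝ) ≤ x}, (omegaM m : ℝ) ^ 2) -
      κ * gammah N h * y * (Fs (pn N) (fp h N) y + PS (pn N) (fp h N) y - Qd (pn N) (fp h N) y)|
    ≤ K' * y ^ τ * (Fs (pn N) (fun p => pn N p ^ (-τ)) y + PS (pn N) (fun p => pn N p ^ (-τ)) y) := by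
  obtain ⟨K', hK', hb⟩ := Cnt_cor H h hh hτ
  refine ⟨K', hK', ?_⟩
  intro x y hx hy
  rw [moment_eq H h hh x hx, ← hy]
  have hN := H.two
  have hy0 : 0 < y := by rw [hy]; positivity
  have hyt : 0 ≤ K' * y ^ τ := by positivity
  set L := lev (pn N) y with hL
  have hp0 : ∀ p, 0 ≤ pn N p ^ (-τ) := fun p => (Real.rpow_pos_of_pos (pn_pos hN p) _).le
  have e1 : Fs (pn N) (fp h N) y + PS (pn N) (fp h N) y - Qd (pn N) (fp h N) y =
      ∑ p ∈ L, ∑ q ∈ L, ((if p = q then fp h N p else 0) +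
        (if pn N p * pn N q ≤ y then fp h N p * fp h N q else 0) -
        (if p = q then (if pn N p * pn N p ≤ y then fp h N p ^ 2 else 0) else 0)) := by
    unfold Fs PS Qd
    simp only [Finset.sum_add_distrib, Finset.sum_sub_distrib]
    congr 1
    · congr 1
      apply Finset.sum_congr rfl
      intro p hp
      rw [Finset.sum_ite_eq, if_pos hp]
    · apply Finset.sum_congr rfl
      intro p hp
      rw [Finset.sum_ite_eq, if_pos hp]
  have e2 : Fs (pn N) (fun p => pn N p ^ (-τ)) y + PS (pn N) (fun p => pn N p ^ (-τ)) y =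
      ∑ p ∈ L, ∑ q ∈ L, ((if p = q then pn N p ^ (-τ) else 0) +
        (if pn N p * pn N q ≤ y then pn N p ^ (-τ) * pn N q ^ (-τ) else 0)) := by
    unfold Fs PS
    simp only [Finset.sum_add_distrib]
    congr 1
    apply Finset.sum_congr rfl
    intro p hp
    rw [Finset.sum_ite_eq, if_pos hp]
  rw [e1, e2, Finset.mul_sum, Finset.mul_sum, ← Finset.sum_sub_distrib]
  refine (Finset.abs_sum_le_sum_abs _ _).trans (Finset.sum_le_sum fun p hp => ?_)
  rw [Finset.mul_sum, Finset.mul_sum, ← Finset.sum_sub_distrib]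
  refine (Finset.abs_sum_le_sum_abs _ _).trans (Finset.sum_le_sum fun q hq => ?_)
  by_cases hpq : p = q
  · subst hpq
    have := hb {p} (by simp) x hx
    rw [← hy, Finset.prod_singleton, Finset.prod_singleton] at this
    simp only [if_true, Finset.pair_eq_singleton]
    have e3 : fp h N p + (if pn N p * pn N p ≤ y then fp h N p * fp h N p else 0) -
        (if pn N p * pn N p ≤ y then fp h N p ^ 2 else 0) = fp h N p := by
      split_ifs <;> ring
    rw [e3]
    refine this.trans ?_
    apply mul_le_mul_of_nonneg_left _ hyt
    apply le_add_of_nonneg_right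
    split_ifs
    · exact mul_nonneg (hp0 p) (hp0 p)
    · exact le_rfl
  · simp only [hpq, if_false, zero_add, sub_zero]
    split_ifs with hle
    · have := hb {p, q} (Finset.card_le_two) x hx
      rw [← hy, Finset.prod_pair hpq, Finset.prod_pair hpq] at this
      exact this
    · rw [Cnt_zero H h hh {p, q} x hx]
      · simp
      · rwa [Finset.prod_pair hpq, ← hy]
end

section
variable {P : Type*} {N : P → ℕ} {κ τ K : ℝ}

lemma Qd_tail (H : Sys N κ τ K) (h : ℕ) (hh : 2 ≤ h) :
    ∃ C, 0 ≤ C ∧ ∀ y, 1 < y →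
      |Qd (pn N) (fp h N) y - ∑' p, fp h N p ^ 2| ≤ C / Real.log y := by
  have hN := H.two
  have hc := (C0_pos h hh).le
  have s3 := (pn_summable H (3/2) (by norm_num)).mul_left (C0 h ^ 2)
  have hn : ∀ p, 0 ≤ C0 h ^ 2 * pn N p ^ (-(3/2) : ℝ) := by
    intro p
    have := pn_pos hN p
    positivity
  have f2 : ∀ p, fp h N p ^ 2 ≤ C0 h ^ 2 * pn N p ^ (-(3/2):ℝ) * pn N p ^ (-(1/2):ℝ) := by
    intro p
    have h2 := pn_pos hN p
    have hf := fp_le hN h hh p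
    have hf0 := (fp_pos hN h hh p).le
    calc _ ≤ (C0 h * (pn N p)⁻¹) ^ 2 := pow_le_pow_left₀ hf0 hf 2
      _ = C0 h ^ 2 * ((pn N p) ^ (-1:ℝ) * pn N p ^ (-1:ℝ)) := by
          rw [Real.rpow_neg_one]; ring
      _ = _ := by
          rw [mul_assoc, ← Real.rpow_add h2, ← Real.rpow_add h2]; norm_num
  have sf : Summable (fun p => fp h N p ^ 2) := by
    apply Summable.of_nonneg_of_le (fun p => sq_nonneg _) _ s3
    intro p
    refine (f2 p).trans (mul_le_of_le_one_right (hn p) ?_)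
    apply Real.rpow_le_one_of_one_le_of_nonpos _ (by norm_num)
    linarith [pn_two hN p]
  refine ⟨4 * ∑' p, C0 h ^ 2 * pn N p ^ (-(3/2) : ℝ), mul_nonneg (by norm_num) (tsum_nonneg hn), ?_⟩
  intro y hy
  have hlog := Real.log_pos hy
  have hy0 : 0 < y := by linarith
  have eQ : Qd (pn N) (fp h N) y = ∑' p, if pn N p * pn N p ≤ y then fp h N p ^ 2 else 0 := by
    unfold Qd
    rw [tsum_eq_sum]
    intro p hp
    rw [mem_lev (fin_pn H.fin)] at hp
    rw [if_neg]
    have := pn_two hN p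
    nlinarith
  have sg : Summable (fun p => if pn N p * pn N p ≤ y then fp h N p ^ 2 else 0) := by
    apply Summable.of_nonneg_of_le _ _ sf
    · intro p; split_ifs <;> positivity
    · intro p; split_ifs
      · exact le_rfl
      · positivity
  rw [eQ, abs_sub_comm, ← sf.tsum_sub sg, abs_of_nonneg]
  · have hyl : y ^ (-(1/4):ℝ) ≤ 4 / Real.log y := by
      have := Real.log_le_rpow_div hy0.le (show (0:ℝ) < 1/4 by norm_num)
      rw [Real.rpow_neg hy0.le, le_div_iff₀ hlog, inv_mul_le_iff₀ (by positivity)]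
      linarith
    calc _ ≤ ∑' p, (C0 h ^ 2 * pn N p ^ (-(3/2) : ℝ)) * y ^ (-(1/4):ℝ) := by
          apply (sf.sub sg).tsum_le_tsum _ (s3.mul_right _)
          intro p
          split_ifs with hp
          · rw [sub_self]; exact mul_nonneg (hn p) (by positivity)
          · rw [sub_zero]
            refine (f2 p).trans (mul_le_mul_of_nonneg_left ?_ (hn p))
            have h2 := pn_pos hN p
            have : pn N p ^ (-(1/2):ℝ) = (pn N p * pn N p) ^ (-(1/4):ℝ) := by
              rw [Real.mul_rpow h2.le h2.le, ← Real.rpow_add h2]; norm_num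
            rw [this]
            apply Real.rpow_le_rpow_of_nonpos hy0 (le_of_lt (not_le.1 hp)) (by norm_num)
      _ = (∑' p, (C0 h ^ 2 * pn N p ^ (-(3/2) : ℝ))) * y ^ (-(1/4):ℝ) := tsum_mul_right
      _ ≤ (∑' p, (C0 h ^ 2 * pn N p ^ (-(3/2) : ℝ))) * (4 / Real.log y) :=
          mul_le_mul_of_nonneg_left hyl (tsum_nonneg hn)
      _ = _ := by ring
  · apply tsum_nonneg
    intro p
    split_ifs
    · simp
    · simp; positivity

lemma main_bd (H : Sys N κ τ K) (A : ℝ) (hA : IsMertens N A) (h : ℕ) (hh : 2 ≤ h)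
    (hτ : (h:ℝ) < τ * (h+1)) :
    ∃ C, 0 ≤ C ∧ ∀ x y, 0 < x → y = x ^ (1/(h:ℝ)) → 1 ≤ y → 1 ≤ Real.log (Real.log y) →
    |(∑ᶠ m ∈ {m : P →₀ ℕ | HFull h m ∧ (Nm N m : ℝ) ≤ x}, (omegaM m : ℝ) ^ 2) -
      κ * gammah N h * y * ((Real.log (Real.log y) + (D1const N h A + Real.log h)) ^ 2 +
        (Real.log (Real.log y) + (D1const N h A + Real.log h)) - Real.pi ^ 2 / 6 -
        ∑' p, fp h N p ^ 2)| ≤ C * (y * (Real.log (Real.log y) / Real.log y)) := by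
  obtain ⟨K1, hK1, hM⟩ := moment_bd H h hh hτ
  obtain ⟨W0, hW0⟩ := Wt_pn H
  obtain ⟨W1, hW1⟩ := Wt_fp H h hh
  obtain ⟨Ca, hCa, hQ⟩ := Qd_tail H h hh
  have hD := D_tendsto H A hA h hh
  set D := D1const N h A + Real.log h with hDdef
  obtain ⟨Cb, hCb, hPS⟩ := PS_main hW1 D hD
  obtain ⟨Cc, hCc, hPE⟩ := PS_err H hW0 A (mert_tendsto H A hA)
  obtain ⟨Cd, hCd, hPN⟩ := prime_neg_sum H τ H.hτ0 H.hτ1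
  have hw := hW1.hC
  refine ⟨K1 * (Cd + Cc) + |κ * gammah N h| * (2 * W1 + Cb + Ca), by positivity, ?_⟩
  intro x y hx hy hy1 hLL
  have hl2 := LL_two hy1 hLL
  have hl0 : 0 < Real.log y := by linarith
  have hy2 : 2 ≤ y := by
    have := Real.log_le_sub_one_of_pos (show 0 < y by linarith)
    linarith
  have hy0 : 0 < y := by linarith
  set T := ∑' p, fp h N p ^ 2
  set S := Fs (pn N) (fp h N) y + PS (pn N) (fp h N) y - Qd (pn N) (fp h N) y with hS
  set LL := Real.log (Real.log y) with hLLd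
  set l := Real.log y with hld
  have i1 : 1 / l ≤ LL / l := div_le_div_of_nonneg_right hLL hl0.le
  have hM' := hM x y hx hy
  have a1 := mertens2 hW1 D hD y hy2
  have a2 := hPS y hy1 hLL
  have a3 := hQ y (by linarith)
  have a4 := hPE y hy1 hLL
  have a5 := hPN y hy2
  have b1 : |S - ((LL + D) ^ 2 + (LL + D) - Real.pi ^ 2 / 6 - T)| ≤ (2 * W1 + Cb + Ca) * (LL / l) := by
    have e : S - ((LL + D) ^ 2 + (LL + D) - Real.pi ^ 2 / 6 - T) =
        (Fs (pn N) (fp h N) y - LL - D) + (PS (pn N) (fp h N) y - ((LL + D) ^ 2 - Real.pi ^ 2 / 6))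
        + (-(Qd (pn N) (fp h N) y - T)) := by rw [hS]; ring
    rw [e]
    have c1 : 2 * W1 / l ≤ 2 * W1 * (LL / l) := by
      rw [div_eq_mul_one_div]; gcongr
    have c2 : Ca / l ≤ Ca * (LL / l) := by
      rw [div_eq_mul_one_div]; gcongr
    calc _ ≤ 2 * W1 * (LL / l) + Cb * (LL / l) + Ca * (LL / l) := by
          refine (abs_add_le _ _).trans (add_le_add ((abs_add_le _ _).trans (add_le_add ?_ ?_)) ?_)
          · exact a1.trans c1
          · exact a2
          · rw [abs_neg]; exact a3.trans c2
      _ = _ := by ring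
  have b2 : K1 * y ^ τ * (Fs (pn N) (fun p => pn N p ^ (-τ)) y + PS (pn N) (fun p => pn N p ^ (-τ)) y)
      ≤ K1 * (Cd + Cc) * (y * (LL / l)) := by
    have hyy : y ^ τ * y ^ (1 - τ) = y := by
      rw [← Real.rpow_add hy0]; simp
    have c3 : y ^ (1 - τ) / l ≤ y ^ (1 - τ) * (LL / l) := by
      rw [div_eq_mul_one_div]; gcongr
    calc _ ≤ K1 * y ^ τ * (Cd * (y ^ (1 - τ) * (LL / l)) + Cc * (y ^ (1 - τ) * (LL / l))) := by
          apply mul_le_mul_of_nonneg_left _ (by positivity)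
          exact add_le_add (a5.trans (mul_le_mul_of_nonneg_left c3 hCd)) a4
      _ = K1 * (Cd + Cc) * ((y ^ τ * y ^ (1 - τ)) * (LL / l)) := by ring
      _ = _ := by rw [hyy]
  set M := (∑ᶠ m ∈ {m : P →₀ ℕ | HFull h m ∧ (Nm N m : ℝ) ≤ x}, (omegaM m : ℝ) ^ 2)
  have e : M - κ * gammah N h * y * ((LL + D) ^ 2 + (LL + D) - Real.pi ^ 2 / 6 - T) =
      (M - κ * gammah N h * y * S) + (κ * gammah N h) * y *
        (S - ((LL + D) ^ 2 + (LL + D) - Real.pi ^ 2 / 6 - T)) := by ring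
  rw [e]
  calc _ ≤ K1 * (Cd + Cc) * (y * (LL / l)) +
        |κ * gammah N h| * y * ((2 * W1 + Cb + Ca) * (LL / l)) := by
        refine (abs_add_le _ _).trans (add_le_add (hM'.trans b2) ?_)
        rw [abs_mul, abs_mul, abs_of_pos hy0]
        gcongr
    _ = _ := by ring

end

/-- Second moment of `ω` over `h`-full elements. -/
theorem second_moment_omega_hfull {P : Type*} [Countable P] (N : P → ℕ)
    (hN : ∀ p, 2 ≤ N p) (κ θ : ℝ) (hstar : StarCond N κ θ)
    (A : ℝ) (hA : IsMertens N A) (h : ℕ) (hh : 2 ≤ h) :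
    (fun x : ℝ =>
        (∑ᶠ m ∈ {m : P →₀ ℕ | HFull h m ∧ (Nm N m : ℝ) ≤ x}, (omegaM m : ℝ) ^ 2)
          - κ * gammah N h * (x ^ (1 / (h : ℝ)) * Real.log (Real.log x) ^ 2)
          - κ * gammah N h * (2 * D1const N h A + 1) *
              (x ^ (1 / (h : ℝ)) * Real.log (Real.log x))
          - κ * gammah N h * D2const N h A * x ^ (1 / (h : ℝ)))
      =O[atTop]
        fun x : ℝ => x ^ (1 / (h : ℝ)) * Real.log (Real.log x) / Real.log x := by
  have hh0 : (0:ℝ) < h := by positivity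
  have hh1 : (1:ℝ) ≤ h := by exact_mod_cast (by omega : 1 ≤ h)
  have hs := hstar
  obtain ⟨_, hθ0, hθ1, _⟩ := hs
  have hr : (h:ℝ)/((h:ℝ)+1) < 1 := by rw [div_lt_one (by positivity)]; linarith
  have hr0 : 0 < (h:ℝ)/((h:ℝ)+1) := by positivity
  obtain ⟨τ, ht1, ht2⟩ := exists_between (max_lt hθ1 hr)
  have ht3 : θ ≤ τ := ((le_max_left _ _).trans_lt ht1).le
  have ht4 : (h:ℝ)/((h:ℝ)+1) < τ := (le_max_right _ _).trans_lt ht1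
  obtain ⟨K, H⟩ := star_sys hN κ θ τ hstar ht3 (by linarith) ht2
  obtain ⟨C, hC, hb⟩ := main_bd H A hA h hh ((div_lt_iff₀ (by positivity)).1 ht4)
  apply IsBigO.of_bound (C * h)
  have hy : Tendsto (fun x : ℝ => x ^ (1/(h:ℝ))) atTop atTop :=
    tendsto_rpow_atTop (by positivity)
  have hll : Tendsto (fun x : ℝ => Real.log (Real.log (x ^ (1/(h:ℝ))))) atTop atTop :=
    Real.tendsto_log_atTop.comp (Real.tendsto_log_atTop.comp hy)
  filter_upwards [eventually_gt_atTop 1, hy.eventually_ge_atTop 1, hll.eventually_ge_atTop 1]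
    with x hx hy1 hLL
  have hx0 : 0 < x := by linarith
  have hlx : 0 < Real.log x := Real.log_pos hx
  have key := hb x _ hx0 rfl hy1 hLL
  simp only [Set.mem_setOf_eq] at key ⊢
  generalize hM : (∑ᶠ (m : P →₀ ℕ) (_ : HFull h m ∧ (Nm N m : ℝ) ≤ x), (omegaM m : ℝ) ^ 2) = M at key ⊢
  set y := x ^ (1/(h:ℝ)) with hyd
  have hy0 : 0 < y := by linarith
  have ely : Real.log y = Real.log x / h := by
    rw [hyd, Real.log_rpow hx0]; ring
  have elly : Real.log (Real.log y) = Real.log (Real.log x) - Real.log h := by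
    rw [ely, Real.log_div hlx.ne' hh0.ne']
  have hlh : 0 ≤ Real.log h := Real.log_nonneg hh1
  have hT : D2const N h A = D1const N h A ^ 2 + D1const N h A + Bconst - ∑' p, fp h N p ^ 2 := rfl
  have hLx : 0 < Real.log (Real.log x) := by linarith
  rw [hT, Bconst, Real.norm_eq_abs, Real.norm_eq_abs, abs_of_nonneg (a := y * _ / _) (by positivity)]
  have e2 : Real.log (Real.log y) + (D1const N h A + Real.log h) =
      Real.log (Real.log x) + D1const N h A := by rw [elly]; ring
  rw [e2] at key
  refine le_trans (le_of_eq ?_) (key.trans ?_)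
  · congr 1; ring
  · calc _ ≤ C * (y * (Real.log (Real.log x) / Real.log y)) := by
          have : 0 < Real.log y := by rw [ely]; positivity
          have h9 : Real.log (Real.log y) ≤ Real.log (Real.log x) := by linarith
          exact mul_le_mul_of_nonneg_left (mul_le_mul_of_nonneg_left
            (div_le_div_of_nonneg_right h9 this.le) hy0.le) hC
      _ = _ := by rw [ely]; field_simp
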